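/- arXiv:1410.1232 — 5 statements merged into one kernel-verified Lean document; each statement's English description precedes it below -/
import Mathlib

section
/- Assume additionally α ≠ 0. Then L_3 M = M L_3, where L_3 is the symmetric 2(N+1)×2(N+1) real matrix whose only nonzero entries (1-based indexing, together with the symmetric positions) are, for k = 1, …, N+1: (L_3)_{2k,2k} = (k-1)(n+k)p(n-p+1)/((n+2)(p+1)(n-p)); (L_3)_{2k-1,2k-1} = (k-1)(n+k)/(n+2); (L_3)_{2k-1,2k} = (k-1)(n-p+N+1)(p+N+1)(n+k)√p / (α(p+1)(n+2)√((n-p)(p+k-1)(p+k)(n-p+k)(n-p+k-1))); and for k = 1, …, N: (L_3)_{2k-1,2k+1} = ((N-k+1)(N+n+k+1)/(α(n+2))) · √( k(p+k-1)(n-p+1+k)(n+k) / ((n+2k-1)(n+2k+1)(p+k)(n-p+k)) ) and (L_3)_{2k,2k+2} = (p(n-p+1)(N-k+1)(N+n+k+1)/(α(n+2)(n-p)(p+1))) · √( k(n-p+k-1)(p+k+1)(n+k) / ((n+2k-1)(n+2k+1)(p+k)(n-p+k)) ). -/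
open Matrix

/-- Pochhammer symbol `(a)_k = a (a+1) ⋯ (a+k-1)`. -/
noncomputable def poch (a : ℝ) (k : ℕ) : ℝ := ∏ i ∈ Finset.range k, (a + i)

/-- Gegenbauer polynomial `C_w^λ(x)`, with the convention `C_w^λ = 0` for `w < 0`. -/
noncomputable def geg (l : ℝ) (w : ℤ) (x : ℝ) : ℝ :=
  if w < 0 then 0 else
    poch (2 * l) w.toNat / (w.toNat.factorial : ℝ) *
      ∑ k ∈ Finset.range (w.toNat + 1),
        (poch (-(w.toNat : ℝ)) k * poch ((w.toNat : ℝ) + 2 * l) k) /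
            (poch (l + 1 / 2) k * (k.factorial : ℝ)) * ((1 - x) / 2) ^ k

/-- The weight matrix `W_{p,n}(x)`. -/
noncomputable def Wmat (n : ℕ) (p : ℝ) (x : ℝ) : Matrix (Fin 2) (Fin 2) ℝ :=
  (1 - x ^ 2) ^ ((n : ℝ) / 2 - 1) •
    !![p * x ^ 2 + (n : ℝ) - p, -(n : ℝ) * x; -(n : ℝ) * x, ((n : ℝ) - p) * x ^ 2 + p]

/-- The matrix valued polynomial `P_w`. -/
noncomputable def Pmat (n : ℕ) (p : ℝ) (w : ℕ) (x : ℝ) : Matrix (Fin 2) (Fin 2) ℝ :=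
  !![1 / ((n : ℝ) + 1) * geg (((n : ℝ) + 1) / 2) (w : ℤ) x +
        1 / (p + w) * geg (((n : ℝ) + 3) / 2) ((w : ℤ) - 2) x,
      1 / (p + w) * geg (((n : ℝ) + 3) / 2) ((w : ℤ) - 1) x;
      1 / ((n : ℝ) - p + w) * geg (((n : ℝ) + 3) / 2) ((w : ℤ) - 1) x,
      1 / ((n : ℝ) + 1) * geg (((n : ℝ) + 1) / 2) (w : ℤ) x +
        1 / ((n : ℝ) - p + w) * geg (((n : ℝ) + 3) / 2) ((w : ℤ) - 2) x]

/-- The normalizing matrix `S_w`: the (diagonal, positive definite) inverse square root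
of `‖P_w‖² = ∫_{-1}^1 P_w W_{p,n} P_w^T dx`, given explicitly. -/
noncomputable def Smat (n : ℕ) (p : ℝ) (w : ℕ) : Matrix (Fin 2) (Fin 2) ℝ :=
  Real.sqrt (((w.factorial : ℝ) * ((n : ℝ) + 1) * ((n : ℝ) + 2 * w + 1) *
        Real.Gamma ((n : ℝ) / 2 + 3 / 2)) /
      (Real.sqrt Real.pi * 2 ^ (w / 2) * Real.Gamma ((n : ℝ) / 2 + 1 + (w / 2 : ℕ)) *
        ∏ k ∈ Finset.range ((w + 1) / 2), ((n : ℝ) + 2 * k + 1))) •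
    Matrix.diagonal ![Real.sqrt ((p + w) / (p * ((n : ℝ) - p + w + 1))),
      Real.sqrt (((n : ℝ) - p + w) / (((n : ℝ) - p) * (p + w + 1)))]

/-- The orthonormal matrix valued polynomials `Q_w = S_w P_w`. -/
noncomputable def Qmat (n : ℕ) (p : ℝ) (w : ℕ) (x : ℝ) : Matrix (Fin 2) (Fin 2) ℝ :=
  Smat n p w * Pmat n p w x

/-- The `2 × 2` block `M^{i,j} = ∫_{-1}^α Q_i(x) W_{p,n}(x) Q_j(x)^T dx`. -/
noncomputable def Mblk (n : ℕ) (p α : ℝ) (i j : ℕ) : Matrix (Fin 2) (Fin 2) ℝ :=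
  Matrix.of fun a b : Fin 2 =>
    ∫ x in (-1 : ℝ)..α, (Qmat n p i x * Wmat n p x * (Qmat n p j x)ᵀ) a b

/-- The full `2(N+1) × 2(N+1)` matrix `M`, with (1-based) entries
`M_{2i+1,2j+1} = M^{i,j}_{11}`, `M_{2i+1,2j+2} = M^{i,j}_{12}`,
`M_{2i+2,2j+1} = M^{i,j}_{21}`, `M_{2i+2,2j+2} = M^{i,j}_{22}`. -/
noncomputable def Mfull (n : ℕ) (p α : ℝ) (N : ℕ) :
    Matrix (Fin (2 * (N + 1))) (Fin (2 * (N + 1))) ℝ :=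
  Matrix.of fun r c =>
    Mblk n p α (r.val / 2) (c.val / 2) ⟨r.val % 2, by omega⟩ ⟨c.val % 2, by omega⟩

/-- The even diagonal entries `(L_3)_{2k,2k}`. -/
noncomputable def L3dE (n : ℕ) (p : ℝ) (k : ℕ) : ℝ :=
  ((k : ℝ) - 1) * ((n : ℝ) + k) * p * ((n : ℝ) - p + 1) /
    (((n : ℝ) + 2) * (p + 1) * ((n : ℝ) - p))

/-- The odd diagonal entries `(L_3)_{2k-1,2k-1}`. -/
noncomputable def L3dO (n : ℕ) (k : ℕ) : ℝ :=
  ((k : ℝ) - 1) * ((n : ℝ) + k) / ((n : ℝ) + 2)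

/-- The entries `(L_3)_{2k-1,2k}`. -/
noncomputable def L3b (n : ℕ) (p α : ℝ) (N : ℕ) (k : ℕ) : ℝ :=
  ((k : ℝ) - 1) * ((n : ℝ) - p + N + 1) * (p + N + 1) * ((n : ℝ) + k) * Real.sqrt p /
    (α * (p + 1) * ((n : ℝ) + 2) *
      Real.sqrt (((n : ℝ) - p) * (p + k - 1) * (p + k) * ((n : ℝ) - p + k) *
        ((n : ℝ) - p + k - 1)))

/-- The entries `(L_3)_{2k-1,2k+1}`. -/
noncomputable def L3e (n : ℕ) (p α : ℝ) (N : ℕ) (k : ℕ) : ℝ :=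
  ((N : ℝ) - k + 1) * ((N : ℝ) + n + k + 1) / (α * ((n : ℝ) + 2)) *
    Real.sqrt ((k : ℝ) * (p + k - 1) * ((n : ℝ) - p + 1 + k) * ((n : ℝ) + k) /
      (((n : ℝ) + 2 * k - 1) * ((n : ℝ) + 2 * k + 1) * (p + k) * ((n : ℝ) - p + k)))

/-- The entries `(L_3)_{2k,2k+2}`. -/
noncomputable def L3f (n : ℕ) (p α : ℝ) (N : ℕ) (k : ℕ) : ℝ :=
  p * ((n : ℝ) - p + 1) * ((N : ℝ) - k + 1) * ((N : ℝ) + n + k + 1) /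
      (α * ((n : ℝ) + 2) * ((n : ℝ) - p) * (p + 1)) *
    Real.sqrt ((k : ℝ) * ((n : ℝ) - p + k - 1) * (p + k + 1) * ((n : ℝ) + k) /
      (((n : ℝ) + 2 * k - 1) * ((n : ℝ) + 2 * k + 1) * (p + k) * ((n : ℝ) - p + k)))

/-- The symmetric matrix `L_3`: in 1-based indexing its only nonzero entries (up to
symmetry) are `(L_3)_{2k,2k}`, `(L_3)_{2k-1,2k-1}`, `(L_3)_{2k-1,2k}` for
`k = 1, …, N+1`, and `(L_3)_{2k-1,2k+1}`, `(L_3)_{2k,2k+2}` for `k = 1, …, N`. -/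
noncomputable def L3 (n : ℕ) (p α : ℝ) (N : ℕ) :
    Matrix (Fin (2 * (N + 1))) (Fin (2 * (N + 1))) ℝ :=
  Matrix.of fun i j =>
    let r := i.val + 1
    let s := j.val + 1
    if r = s then (if r % 2 = 0 then L3dE n p (r / 2) else L3dO n ((r + 1) / 2))
    else if s = r + 1 ∧ r % 2 = 1 then L3b n p α N (s / 2)
    else if r = s + 1 ∧ s % 2 = 1 then L3b n p α N (r / 2)
    else if s = r + 2 ∧ r % 2 = 1 then L3e n p α N ((r + 1) / 2)
    else if r = s + 2 ∧ s % 2 = 1 then L3e n p α N ((s + 1) / 2)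
    else if s = r + 2 ∧ r % 2 = 0 then L3f n p α N (r / 2)
    else if r = s + 2 ∧ s % 2 = 0 then L3f n p α N (s / 2)
    else 0


open Polynomial in
/-- Coefficients (in `t = (1-x)/2`) of `c_w = C_w^{(n+1)/2}/(n+1)`. -/
noncomputable def ac (n w k : ℕ) : ℝ :=
  1 / ((n : ℝ) + 1) * (poch ((n : ℝ) + 1) w / (w.factorial : ℝ) *
    ((poch (-(w : ℝ)) k * poch ((w : ℝ) + ((n : ℝ) + 1)) k) /
      (poch ((n : ℝ) / 2 + 1) k * (k.factorial : ℝ))))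

lemma poch_succ (a : ℝ) (k : ℕ) : poch a (k + 1) = poch a k * (a + k) := by
  simp [poch, Finset.prod_range_succ]

lemma poch_succ' (a : ℝ) (k : ℕ) : poch a (k + 1) = a * poch (a + 1) k := by
  simp only [poch, Finset.prod_range_succ']
  rw [mul_comm]
  congr 1
  · simp
  · apply Finset.prod_congr rfl
    intro i _
    push_cast; ring

lemma poch_pos {a : ℝ} (ha : 0 < a) (k : ℕ) : 0 < poch a k := by
  unfold poch
  apply Finset.prod_pos
  intro i _
  positivity

lemma poch_shift (a : ℝ) (k : ℕ) : a * poch (a + 1) k = poch a k * (a + k) := by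
  rw [← poch_succ', poch_succ]

lemma poch_neg_zero (w k : ℕ) (h : w < k) : poch (-(w : ℝ)) k = 0 := by
  unfold poch
  apply Finset.prod_eq_zero (Finset.mem_range.2 h)
  simp

lemma ac_zero (n w k : ℕ) (h : w < k) : ac n w k = 0 := by
  simp [ac, poch_neg_zero w k h]

lemma ac_succ_k (n w k : ℕ) :
    ((n : ℝ) / 2 + 1 + k) * (k + 1) * ac n w (k + 1) =
      ((k : ℝ) - w) * (w + n + 1 + k) * ac n w k := by
  have h1 := poch_pos (a := (n : ℝ) / 2 + 1) (by positivity) k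
  have h3 : (0 : ℝ) < k.factorial := by positivity
  have h4 : (0 : ℝ) < w.factorial := by positivity
  unfold ac
  rw [poch_succ, poch_succ, poch_succ, Nat.factorial_succ]
  have h5 : (n : ℝ) / 2 + 1 + k ≠ 0 := by positivity
  push_cast
  field_simp
  ring

lemma ac_succ_w (n w k : ℕ) :
    ((w : ℝ) + 1 - k) * ac n (w + 1) k = (w + n + 1 + k) * ac n w k := by
  have h1 := poch_pos (a := (n : ℝ) / 2 + 1) (by positivity) k
  have h3 : (0 : ℝ) < k.factorial := by positivity
  have h4 : (0 : ℝ) < w.factorial := by positivity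
  have e1 := poch_shift (-((w : ℝ) + 1)) k
  have e2 := poch_shift ((w : ℝ) + ((n : ℝ) + 1)) k
  rw [show -((w : ℝ) + 1) + 1 = -(w : ℝ) by ring] at e1
  unfold ac
  rw [poch_succ, Nat.factorial_succ]
  push_cast
  rw [show (w : ℝ) + 1 + ((n : ℝ) + 1) = (w : ℝ) + ((n : ℝ) + 1) + 1 by ring]
  generalize poch (-((w : ℝ) + 1)) k = A at *
  generalize poch (-(w : ℝ)) k = B at *
  generalize poch ((w : ℝ) + ((n : ℝ) + 1) + 1) k = X at *
  generalize poch ((w : ℝ) + ((n : ℝ) + 1)) k = Y at *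
  generalize poch ((n : ℝ) / 2 + 1) k = Z at *
  generalize poch ((n : ℝ) + 1) w = U at *
  field_simp
  linear_combination U * (w+1-k) * A * e2 + U * Y * (w+n+1+k) * e1

open Polynomial in
/-- `c_w` as a polynomial in `t`. -/
noncomputable def tp (n w : ℕ) : ℝ[X] := ∑ k ∈ Finset.range (w + 1), C (ac n w k) * X ^ k

open Polynomial in
lemma tp_coeff (n w k : ℕ) : (tp n w).coeff k = ac n w k := by
  unfold tp
  simp only [finsetSum_coeff, coeff_C_mul, coeff_X_pow]
  simp
  intro h
  rw [ac_zero n w k (by omega)]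

open Polynomial in
lemma tp_b (n w : ℕ) : derivative (tp n w) =
    derivative (tp n (w + 1)) - C 2 * (X * derivative (tp n (w + 1)))
      + C (2 * ((w : ℝ) + 1)) * tp n (w + 1) := by
  ext k
  have h1 := ac_succ_k n w k
  have h2 := ac_succ_k n (w + 1) k
  have h3 := ac_succ_w n w k
  have h5 : (n : ℝ) / 2 + 1 + k ≠ 0 := by positivity
  have key : ac n w (k + 1) * ((k : ℝ) + 1) =
      ac n (w + 1) (k + 1) * ((k : ℝ) + 1) - 2 * (k * ac n (w + 1) k)
        + 2 * ((w : ℝ) + 1) * ac n (w + 1) k := by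
    apply mul_left_cancel₀ h5
    push_cast at h2
    linear_combination h1 - h2 + (-(w + n + 2 + k : ℝ) - 0) * (-1) * h3 * (-1) * (-1) - 2 * ((n : ℝ) / 2 + 1 + k) * h3
  cases k with
  | zero =>
    simp only [coeff_add, coeff_sub, coeff_C_mul, coeff_derivative, coeff_X_mul_zero, tp_coeff]
    simpa using key
  | succ k =>
    simp only [coeff_add, coeff_sub, coeff_C_mul, coeff_derivative, coeff_X_mul, tp_coeff]
    push_cast at key ⊢
    linear_combination key

open Polynomial in
lemma tp_d (n w : ℕ) : C ((w : ℝ) + 1 + n) * tp n w =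
    C ((w : ℝ) + 1) * tp n (w + 1) - C (2 * ((w : ℝ) + 1)) * (X * tp n (w + 1))
      - C 2 * (X * derivative (tp n (w + 1))) + C 2 * (X * (X * derivative (tp n (w + 1)))) := by
  ext k
  cases k with
  | zero =>
    simp only [coeff_add, coeff_sub, coeff_C_mul, coeff_X_mul_zero, tp_coeff]
    have h3 := ac_succ_w n w 0
    push_cast at h3
    linear_combination -h3
  | succ k =>
    have h1 := ac_succ_k n w k
    have h2 := ac_succ_k n (w + 1) k
    have h3 := ac_succ_w n w k
    have h5 : ((n : ℝ) / 2 + 1 + k) * (k + 1) ≠ 0 := by positivity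
    have key : ((w : ℝ) + 1 + n) * ac n w (k + 1) =
      ((w : ℝ) + 1) * ac n (w + 1) (k + 1) - 2 * ((w : ℝ) + 1) * ac n (w + 1) k
       - 2 * (ac n (w + 1) (k + 1) * (k + 1)) + 2 * (k * ac n (w + 1) k) := by
      apply mul_left_cancel₀ h5
      push_cast at h2
      linear_combination ((w : ℝ) + 1 + n) * h1 - ((w : ℝ) + 1 - 2 * (k + 1)) * h2
        + (2 * ((n : ℝ) / 2 + 1 + k) * (k + 1)) * h3 + (w + 1 - 2 * (k + 1)) * (w + n + 2 + k) * h3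
    cases k with
    | zero =>
      simp only [coeff_add, coeff_sub, coeff_C_mul, coeff_derivative, coeff_X_mul,
        coeff_X_mul_zero, tp_coeff]
      push_cast at key ⊢
      linear_combination key
    | succ k =>
      simp only [coeff_add, coeff_sub, coeff_C_mul, coeff_derivative, coeff_X_mul, tp_coeff]
      push_cast at key ⊢
      linear_combination key

open Polynomial in
/-- `c_w` as a polynomial in `x`. -/
noncomputable def Cx (n w : ℕ) : ℝ[X] := (tp n w).comp (C (1 / 2) * (1 - X))

/-- jets of `c_w` -/
noncomputable def cj0 (n w : ℕ) (x : ℝ) : ℝ := (Cx n w).eval x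
noncomputable def cj1 (n w : ℕ) (x : ℝ) : ℝ := (Polynomial.derivative (Cx n w)).eval x
noncomputable def cj2 (n w : ℕ) (x : ℝ) : ℝ :=
  (Polynomial.derivative (Polynomial.derivative (Cx n w))).eval x
noncomputable def cj3 (n w : ℕ) (x : ℝ) : ℝ :=
  (Polynomial.derivative (Polynomial.derivative (Polynomial.derivative (Cx n w)))).eval x

lemma cj0_deriv (n w : ℕ) (x : ℝ) : HasDerivAt (cj0 n w) (cj1 n w x) x :=
  (Cx n w).hasDerivAt x
lemma cj1_deriv (n w : ℕ) (x : ℝ) : HasDerivAt (cj1 n w) (cj2 n w x) x :=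
  (Polynomial.derivative (Cx n w)).hasDerivAt x
lemma cj2_deriv (n w : ℕ) (x : ℝ) : HasDerivAt (cj2 n w) (cj3 n w x) x :=
  (Polynomial.derivative (Polynomial.derivative (Cx n w))).hasDerivAt x

open Polynomial in
lemma Cx_der (n w : ℕ) : derivative (Cx n w) =
    C (-1 / 2) * (derivative (tp n w)).comp (C (1 / 2) * (1 - X)) := by
  unfold Cx
  rw [derivative_comp]
  simp only [derivative_mul, derivative_C, derivative_sub, derivative_one, derivative_X]
  have : (C (-1 / 2) : ℝ[X]) = - C (1 / 2) := by rw [← C_neg]; congr 1; norm_num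
  rw [this]
  ring

lemma cj0_eq (n w : ℕ) (x : ℝ) : cj0 n w x = (tp n w).eval ((1 - x) / 2) := by
  have h : (1 - x) / 2 = 1 / 2 * (1 - x) := by ring
  rw [h]
  simp [cj0, Cx, Polynomial.eval_comp]

lemma cj1_eq (n w : ℕ) (x : ℝ) : cj1 n w x =
    -1 / 2 * (Polynomial.derivative (tp n w)).eval ((1 - x) / 2) := by
  have h : (1 - x) / 2 = 1 / 2 * (1 - x) := by ring
  rw [h]
  simp [cj1, Cx_der, Polynomial.eval_comp]

lemma rec_b (n w : ℕ) (x : ℝ) :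
    cj1 n w x = x * cj1 n (w + 1) x - (w + 1) * cj0 n (w + 1) x := by
  have h := congrArg (Polynomial.eval ((1 - x) / 2)) (tp_b n w)
  simp only [Polynomial.eval_add, Polynomial.eval_sub, Polynomial.eval_mul, Polynomial.eval_C,
    Polynomial.eval_X] at h
  rw [cj1_eq, cj1_eq, cj0_eq]
  linear_combination (-1 / 2) * h

lemma rec_d (n w : ℕ) (x : ℝ) :
    ((w : ℝ) + 1 + n) * cj0 n w x =
      (w + 1) * x * cj0 n (w + 1) x + (1 - x ^ 2) * cj1 n (w + 1) x := by
  have h := congrArg (Polynomial.eval ((1 - x) / 2)) (tp_d n w)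
  simp only [Polynomial.eval_add, Polynomial.eval_sub, Polynomial.eval_mul, Polynomial.eval_C,
    Polynomial.eval_X] at h
  rw [cj0_eq, cj1_eq, cj0_eq]
  linear_combination h

lemma rec_up1 (n w : ℕ) (x : ℝ) :
    cj1 n (w + 1) x = x * cj1 n w x + (w + n + 1) * cj0 n w x := by
  linear_combination -rec_d n w x - x * rec_b n w x

lemma rec_up0 (n w : ℕ) (x : ℝ) :
    ((w : ℝ) + 1) * cj0 n (w + 1) x = (w + n + 1) * x * cj0 n w x - (1 - x ^ 2) * cj1 n w x := by
  linear_combination (-x) * rec_d n w x + (1 - x ^ 2) * rec_b n w x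

lemma ode2_succ (n w : ℕ) (x : ℝ) :
    (1 - x ^ 2) * cj2 n (w + 1) x = (n + 2) * x * cj1 n (w + 1) x
      - ((w : ℝ) + 1) * (w + n + 2) * cj0 n (w + 1) x := by
  have h1 : HasDerivAt (fun x => ((w : ℝ) + 1 + n) * cj0 n w x)
      (((w : ℝ) + 1 + n) * cj1 n w x) x := (cj0_deriv n w x).const_mul _
  have h2 : HasDerivAt (fun x => ((w : ℝ) + 1) * x * cj0 n (w + 1) x
      + (1 - x ^ 2) * cj1 n (w + 1) x)
      ((((w : ℝ) + 1) * 1) * cj0 n (w + 1) x + ((w : ℝ) + 1) * x * cj1 n (w + 1) x +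
       ((-(2 * x)) * cj1 n (w + 1) x + (1 - x ^ 2) * cj2 n (w + 1) x)) x := by
    have h3 : HasDerivAt (fun x : ℝ => 1 - x ^ 2) (-(2 * x)) x := by
      simpa using (hasDerivAt_pow 2 x).const_sub 1
    exact (((hasDerivAt_id' x).const_mul _).mul (cj0_deriv n (w + 1) x)).add
      (h3.mul (cj1_deriv n (w + 1) x))
  have h4 : (fun x => ((w : ℝ) + 1 + n) * cj0 n w x) = (fun x => ((w : ℝ) + 1) * x * cj0 n (w + 1) x
      + (1 - x ^ 2) * cj1 n (w + 1) x) := by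
    funext y; exact rec_d n w y
  rw [h4] at h1
  have h5 := h1.unique h2
  have h6 := rec_b n w x
  linear_combination -h5 + ((w : ℝ) + 1 + n) * h6

lemma tp_zero_der (n : ℕ) : Polynomial.derivative (tp n 0) = 0 := by
  simp [tp]

lemma cj1_zero (n : ℕ) (x : ℝ) : cj1 n 0 x = 0 := by
  simp [cj1_eq, tp_zero_der]

lemma cj2_zero (n : ℕ) (x : ℝ) : cj2 n 0 x = 0 := by
  simp [cj2, Cx_der, tp_zero_der]

lemma ode2 (n w : ℕ) (x : ℝ) :
    (1 - x ^ 2) * cj2 n w x = (n + 2) * x * cj1 n w x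
      - (w : ℝ) * (w + n + 1) * cj0 n w x := by
  cases w with
  | zero => simp [cj1_zero, cj2_zero]
  | succ w =>
    rw [ode2_succ]; push_cast; ring

lemma ode3 (n w : ℕ) (x : ℝ) :
    (1 - x ^ 2) * cj3 n w x = (n + 4) * x * cj2 n w x
      + ((n : ℝ) + 2 - (w : ℝ) * (w + n + 1)) * cj1 n w x := by
  have h3 : HasDerivAt (fun x : ℝ => 1 - x ^ 2) (-(2 * x)) x := by
    simpa using (hasDerivAt_pow 2 x).const_sub 1
  have h1 := h3.mul (cj2_deriv n w x)
  have h2 := (((hasDerivAt_id' x).const_mul ((n : ℝ) + 2)).mul (cj1_deriv n w x)).sub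
    ((cj0_deriv n w x).const_mul ((w : ℝ) * (w + n + 1)))
  have h4 : ((fun x : ℝ => 1 - x ^ 2) * cj2 n w) =
    (((fun x => ((n : ℝ) + 2) * x) * cj1 n w) - fun x => (w : ℝ) * (w + n + 1) * cj0 n w x) := by
    funext y; exact ode2 n w y
  rw [h4] at h1
  have h5 := h1.unique h2
  linear_combination h5

lemma geg0 (n w : ℕ) (x : ℝ) :
    1 / ((n : ℝ) + 1) * geg (((n : ℝ) + 1) / 2) (w : ℤ) x = cj0 n w x := by
  rw [cj0_eq]
  unfold geg tp
  rw [if_neg (by omega)]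
  simp only [Int.toNat_natCast, Polynomial.eval_finsetSum, Polynomial.eval_mul, Polynomial.eval_C,
    Polynomial.eval_pow, Polynomial.eval_X, Finset.mul_sum]
  apply Finset.sum_congr rfl
  intro k _
  unfold ac
  rw [show 2 * (((n : ℝ) + 1) / 2) = (n : ℝ) + 1 by ring,
    show ((n : ℝ) + 1) / 2 + 1 / 2 = (n : ℝ) / 2 + 1 by ring]
  ring

lemma geg1_succ (n w : ℕ) (x : ℝ) :
    geg (((n : ℝ) + 3) / 2) (w : ℤ) x = cj1 n (w + 1) x := by
  rw [cj1_eq]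
  unfold geg tp
  rw [if_neg (by omega)]
  simp only [Int.toNat_natCast, Polynomial.derivative_sum, Polynomial.eval_finsetSum]
  rw [Finset.sum_range_succ' _ (w + 1)]
  simp only [Finset.mul_sum, mul_add, pow_zero, mul_one, Polynomial.derivative_C,
    Polynomial.eval_zero, mul_zero, add_zero]
  apply Finset.sum_congr rfl
  intro k _
  rw [Polynomial.derivative_C_mul_X_pow]
  simp only [Polynomial.eval_mul, Polynomial.eval_C,
    Polynomial.eval_pow, Polynomial.eval_X, Nat.add_sub_cancel]
  unfold ac
  rw [show 2 * (((n : ℝ) + 3) / 2) = (n : ℝ) + 1 + 1 + 1 by ring,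
    show ((n : ℝ) + 3) / 2 + 1 / 2 = (n : ℝ) / 2 + 1 + 1 by ring,
    poch_succ' (-((w + 1 : ℕ) : ℝ)), poch_succ' (((w + 1 : ℕ) : ℝ) + _), poch_succ' ((n : ℝ) / 2 + 1),
    poch_succ' ((n : ℝ) + 1)]
  rw [Nat.factorial_succ, Nat.factorial_succ]
  push_cast
  rw [show -((w : ℝ) + 1) + 1 = -(w : ℝ) by ring,
    show (w : ℝ) + ((n : ℝ) + 1 + 1 + 1) = w + n + 3 by ring,
    show (w : ℝ) + 1 + ((n : ℝ) + 1) + 1 = w + n + 3 by ring]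
  have h1 := poch_pos (a := (n : ℝ) / 2 + 1 + 1) (by positivity) k
  have h3 : (0 : ℝ) < k.factorial := by positivity
  have h4 : (0 : ℝ) < w.factorial := by positivity
  have h6 : ((n : ℝ) + 2) * poch ((n : ℝ) + 1 + 1 + 1) w =
      poch ((n : ℝ) + 1 + 1) w * (w + n + 2) := by
    have := poch_shift ((n : ℝ) + 1 + 1) w
    linear_combination this
  have h7 : poch ((n : ℝ) + 1 + 1 + 1) w = poch ((n : ℝ) + 1 + 1) w * (w + n + 2) / (n + 2) := by
    field_simp
    linear_combination h6
  rw [h7]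
  generalize poch (-(w : ℝ)) k = B at *
  generalize poch ((n : ℝ) / 2 + 1 + 1) k = Z at *
  generalize poch ((n : ℝ) + 1 + 1) w = U at *
  generalize poch ((w : ℝ) + n + 3) k = V at *
  generalize ((1 - x) / 2) ^ k = T at *
  have : (n : ℝ) / 2 + 1 ≠ 0 := by positivity
  field_simp
  ring

lemma geg1 (n w : ℕ) (x : ℝ) :
    geg (((n : ℝ) + 3) / 2) ((w : ℤ) - 1) x = cj1 n w x := by
  cases w with
  | zero => rw [cj1_zero]; simp [geg]
  | succ w =>
    rw [← geg1_succ]; congr 1; push_cast; ring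

lemma geg2 (n w : ℕ) (x : ℝ) :
    geg (((n : ℝ) + 3) / 2) ((w : ℤ) - 2) x = x * cj1 n w x - w * cj0 n w x := by
  cases w with
  | zero => simp [geg, cj1_zero]
  | succ w =>
    have := rec_b n w x
    push_cast
    rw [← this, ← geg1]
    congr 1; ring

lemma opid1 (p q n w N α x c0 c1 c2 c3 u0 u1 d0 d1 : ℝ) (hp : 0 < p) (hq : 0 < q)
    (hn : n = p + q) (hw : 0 ≤ w)
    (o2 : (1 - x ^ 2) * c2 = (n + 2) * x * c1 - w * (w + n + 1) * c0)
    (o3 : (1 - x ^ 2) * c3 = (n + 4) * x * c2 + (n + 2 - w * (w + n + 1)) * c1)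
    (hu0 : (w + 1) * u0 = (w + n + 1) * x * c0 - (1 - x ^ 2) * c1)
    (hu1 : u1 = x * c1 + (w + n + 1) * c0)
    (hd0 : (w + n) * d0 = w * x * c0 + (1 - x ^ 2) * c1)
    (hd1 : d1 = x * c1 - w * c0) :
    q * (p + 1) * ((N - w) * (N + n + w + 2) * (w + 1) / (n + 2 * w + 1)) *
        ((p * u0 + x * u1) / (p + w + 1)) +
      q * (p + 1) * ((N - w + 1) * (N + n + w + 1) * (n + w) * (q + w + 1) /
        ((n + 2 * w + 1) * (p + w) * (q + w))) * (p * d0 + x * d1) +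
      q * (p + 1) * α * (w * (n + w + 1)) * ((p * c0 + x * c1) / (p + w)) +
      w * (n + w + 1) * (q + N + 1) * (p + N + 1) * p / ((p + w) * (p + w + 1)) * (c1 / (q + w)) =
    (((p + 2) * c2 + x * c3) / (p + w)) * ((x - α) * (p * (q + 1) - q * (p + 1) * x ^ 2)) +
    (c3 / (p + w)) * ((x - α) * ((q - p) * x)) +
    (((p + 1) * c1 + x * c2) / (p + w)) *
      (p * (q + 1) + α * (q * (p + 1)) * (n + 2) * x - q * (p + 1) * (n + 3) * x ^ 2) +
    (c2 / (p + w)) * (α * p * (n + 2) - (p * (n + 2) - (q - p)) * x) +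
    ((p * c0 + x * c1) / (p + w)) * (N * (N + n + 2) * (q * (p + 1) * x)) +
    (c1 / (p + w)) * (N * (N + n + 2) * p) := by
  subst hu1 hd1
  have hn0 : 0 < n := by rw [hn]; positivity
  have e1 : u0 = ((w + n + 1) * x * c0 - (1 - x ^ 2) * c1) / (w + 1) := by
    field_simp; linear_combination hu0
  have e2 : d0 = (w * x * c0 + (1 - x ^ 2) * c1) / (w + n) := by
    field_simp; linear_combination hd0
  have key : (((p + 2) * c2 + x * c3) / (p + w)) * ((x - α) * (p * (q + 1) - q * (p + 1) * x ^ 2)) +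
    (c3 / (p + w)) * ((x - α) * ((q - p) * x)) +
    (((p + 1) * c1 + x * c2) / (p + w)) *
      (p * (q + 1) + α * (q * (p + 1)) * (n + 2) * x - q * (p + 1) * (n + 3) * x ^ 2) +
    (c2 / (p + w)) * (α * p * (n + 2) - (p * (n + 2) - (q - p)) * x) =
     ((x - α) * (q * (p + 1)) * x * (n + 2 - w * (w + n + 1)) * c1 +
      (α * (p * (n + 2) - (p + 2) * (p * (q + 1))) +
        ((p + 3) * (p * (q + 1)) - (p * (n + 2) - (q - p))) * x) *
        ((n + 2) * x * c1 - w * (w + n + 1) * c0) + (p + 1) * c1 *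
        (p * (q + 1) + α * (q * (p + 1)) * (n + 2) * x - q * (p + 1) * (n + 3) * x ^ 2)) / (p + w) := by
    have : p + w ≠ 0 := by positivity
    field_simp
    subst hn
    linear_combination ((x - α) * (q * (p + 1)) * x) * o3 +
      (α * (p * (p + q + 2) - (p + 2) * (p * (q + 1))) +
        ((p + 3) * (p * (q + 1)) - (p * (p + q + 2) - (q - p))) * x) * o2
  rw [key, e1, e2]
  subst hn
  clear o2 o3 hu0 hd0 key e1 e2
  have : p + w ≠ 0 := by positivity
  have : q + w ≠ 0 := by positivity
  have : w + (p + q) ≠ 0 := by positivity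
  have : p + w + 1 ≠ 0 := by positivity
  have : p + q + 2 * w + 1 ≠ 0 := by positivity
  field_simp
  ring

lemma opid2 (p q n w N α x c0 c1 c2 c3 u0 u1 d0 d1 : ℝ) (hp : 0 < p) (hq : 0 < q)
    (hn : n = p + q) (hw : 0 ≤ w)
    (o2 : (1 - x ^ 2) * c2 = (n + 2) * x * c1 - w * (w + n + 1) * c0)
    (o3 : (1 - x ^ 2) * c3 = (n + 4) * x * c2 + (n + 2 - w * (w + n + 1)) * c1)
    (hu1 : u1 = x * c1 + (w + n + 1) * c0)
    (hd1 : d1 = x * c1 - w * c0) :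
    q * (p + 1) * ((N - w) * (N + n + w + 2) * (w + 1) / (n + 2 * w + 1)) *
        (u1 / (p + w + 1)) +
      q * (p + 1) * ((N - w + 1) * (N + n + w + 1) * (n + w) * (q + w + 1) /
        ((n + 2 * w + 1) * (p + w) * (q + w))) * d1 +
      q * (p + 1) * α * (w * (n + w + 1)) * (c1 / (p + w)) +
      w * (n + w + 1) * (q + N + 1) * (p + N + 1) * p / ((p + w) * (p + w + 1)) *
        ((q * c0 + x * c1) / (q + w)) =
    (((p + 2) * c2 + x * c3) / (p + w)) * ((x - α) * (-(q - p) * x)) +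
    (c3 / (p + w)) * ((x - α) * (q * (p + 1) - p * (q + 1) * x ^ 2)) +
    (((p + 1) * c1 + x * c2) / (p + w)) * (α * q * (n + 2) - (q * (n + 2) + (q - p)) * x) +
    (c2 / (p + w)) *
      (q * (p + 1) + α * (p * (q + 1)) * (n + 2) * x - p * (q + 1) * (n + 3) * x ^ 2) +
    ((p * c0 + x * c1) / (p + w)) * (N * (N + n + 2) * q) +
    (c1 / (p + w)) * (N * (N + n + 2) * (p * (q + 1) * x)) := by
  subst hu1 hd1
  have key : (((p + 2) * c2 + x * c3) / (p + w)) * ((x - α) * (-(q - p) * x)) +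
    (c3 / (p + w)) * ((x - α) * (q * (p + 1) - p * (q + 1) * x ^ 2)) +
    (((p + 1) * c1 + x * c2) / (p + w)) * (α * q * (n + 2) - (q * (n + 2) + (q - p)) * x) +
    (c2 / (p + w)) *
      (q * (p + 1) + α * (p * (q + 1)) * (n + 2) * x - p * (q + 1) * (n + 3) * x ^ 2) =
     ((x - α) * (q * (p + 1)) * (n + 2 - w * (w + n + 1)) * c1 +
      (q * (p + 1) + (-α * (-(q - p) * (p + 2) + q * (p + 1) * (n + 4)) + α * q * (n + 2)
        + p * (q + 1) * α * (n + 2)) * x) *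
        ((n + 2) * x * c1 - w * (w + n + 1) * c0) + (p + 1) * c1 *
        (α * q * (n + 2) - (q * (n + 2) + (q - p)) * x)) / (p + w) := by
    have : p + w ≠ 0 := by positivity
    field_simp
    subst hn
    linear_combination ((x - α) * (q * (p + 1))) * o3 +
      (q * (p + 1) + (-α * (-(q - p) * (p + 2) + q * (p + 1) * (p + q + 4)) + α * q * (p + q + 2)
        + p * (q + 1) * α * (p + q + 2)) * x) * o2
  rw [key]
  subst hn
  clear o2 o3 key
  have : p + w ≠ 0 := by positivity
  have : q + w ≠ 0 := by positivity
  have : p + w + 1 ≠ 0 := by positivity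
  have : p + q + 2 * w + 1 ≠ 0 := by positivity
  field_simp
  ring

/-- the bilinear form of the polynomial part of the weight -/
def bil (n p x f1 f2 g1 g2 : ℝ) : ℝ :=
  f1 * g1 * (p * x ^ 2 + n - p) - n * x * (f1 * g2 + f2 * g1) + f2 * g2 * ((n - p) * x ^ 2 + p)

/-- first component of the commuting differential operator -/
def op1 (p q n N α x f1 f2 a1 a2 b1 b2 : ℝ) : ℝ :=
  b1 * ((x - α) * (p * (q + 1) - q * (p + 1) * x ^ 2)) +
    b2 * ((x - α) * ((q - p) * x)) +
    a1 * (p * (q + 1) + α * (q * (p + 1)) * (n + 2) * x - q * (p + 1) * (n + 3) * x ^ 2) +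
    a2 * (α * p * (n + 2) - (p * (n + 2) - (q - p)) * x) +
    f1 * (N * (N + n + 2) * (q * (p + 1) * x)) +
    f2 * (N * (N + n + 2) * p)

/-- second component of the commuting differential operator -/
def op2 (p q n N α x f1 f2 a1 a2 b1 b2 : ℝ) : ℝ :=
  b1 * ((x - α) * (-(q - p) * x)) +
    b2 * ((x - α) * (q * (p + 1) - p * (q + 1) * x ^ 2)) +
    a1 * (α * q * (n + 2) - (q * (n + 2) + (q - p)) * x) +
    a2 * (q * (p + 1) + α * (p * (q + 1)) * (n + 2) * x - p * (q + 1) * (n + 3) * x ^ 2) +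
    f1 * (N * (N + n + 2) * q) +
    f2 * (N * (N + n + 2) * (p * (q + 1) * x))

lemma wt_integrable (s α : ℝ) (hs : -1 < s) (hα : α ∈ Set.Ioo (-1 : ℝ) 1) :
    IntervalIntegrable (fun x : ℝ => (1 - x ^ 2) ^ s) MeasureTheory.volume (-1) α := by
  have h1 : IntervalIntegrable (fun x : ℝ => (x + 1) ^ s) MeasureTheory.volume (-1) α := by
    have := (intervalIntegral.intervalIntegrable_rpow' (a := 0) (b := α + 1) hs).comp_add_right 1
    simpa using this
  have h2 : ContinuousOn (fun x : ℝ => (1 - x) ^ s) (Set.uIcc (-1) α) := by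
    rw [Set.uIcc_of_le hα.1.le]
    apply ContinuousOn.rpow_const (by fun_prop)
    intro x hx
    left
    have := hx.2; have := hα.2
    linarith
  have h3 := h1.mul_continuousOn h2
  refine h3.congr ?_
  intro x hx
  rw [Set.uIoc_of_le hα.1.le] at hx
  have h4 := hx.1; have h5 := hx.2; have := hα.2
  have h6 : 1 - x ^ 2 = (x + 1) * (1 - x) := by ring
  simp only [h6]
  rw [Real.mul_rpow (by linarith) (by linarith)]

/-- `h` is the image of the row `f` under the differential operator. -/
def Good (p q n N α : ℝ) (f1 f2 h1 h2 : ℝ → ℝ) : Prop :=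
  ∃ a1 a2 b1 b2 : ℝ → ℝ,
    (∀ x, HasDerivAt f1 (a1 x) x) ∧ (∀ x, HasDerivAt f2 (a2 x) x) ∧
    (∀ x, HasDerivAt a1 (b1 x) x) ∧ (∀ x, HasDerivAt a2 (b2 x) x) ∧
    Continuous b1 ∧ Continuous b2 ∧
    (∀ x, h1 x = op1 p q n N α x (f1 x) (f2 x) (a1 x) (a2 x) (b1 x) (b2 x)) ∧
    (∀ x, h2 x = op2 p q n N α x (f1 x) (f2 x) (a1 x) (a2 x) (b1 x) (b2 x))

lemma good_int (p q n N α : ℝ) (hn : n = p + q) (hn0 : 0 < n) (hα : α ∈ Set.Ioo (-1 : ℝ) 1)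
    (f1 f2 h1 h2 g1 g2 k1 k2 : ℝ → ℝ)
    (hf : Good p q n N α f1 f2 h1 h2) (hg : Good p q n N α g1 g2 k1 k2) :
    ∫ x in (-1 : ℝ)..α, (1 - x ^ 2) ^ (n / 2 - 1) *
      (bil n p x (h1 x) (h2 x) (g1 x) (g2 x) - bil n p x (f1 x) (f2 x) (k1 x) (k2 x)) = 0 := by
  obtain ⟨a1, a2, b1, b2, hf1, hf2, ha1, ha2, hb1, hb2, hh1, hh2⟩ := hf
  obtain ⟨c1, c2, d1, d2, hg1, hg2, hc1, hc2, hd1, hd2, hk1, hk2⟩ := hg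
  have cf1 : Continuous f1 := continuous_iff_continuousAt.2 fun x => (hf1 x).continuousAt
  have cf2 : Continuous f2 := continuous_iff_continuousAt.2 fun x => (hf2 x).continuousAt
  have ca1 : Continuous a1 := continuous_iff_continuousAt.2 fun x => (ha1 x).continuousAt
  have ca2 : Continuous a2 := continuous_iff_continuousAt.2 fun x => (ha2 x).continuousAt
  have cg1 : Continuous g1 := continuous_iff_continuousAt.2 fun x => (hg1 x).continuousAt
  have cg2 : Continuous g2 := continuous_iff_continuousAt.2 fun x => (hg2 x).continuousAt
  have cc1 : Continuous c1 := continuous_iff_continuousAt.2 fun x => (hc1 x).continuousAt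
  have cc2 : Continuous c2 := continuous_iff_continuousAt.2 fun x => (hc2 x).continuousAt
  set A : ℝ → ℝ := fun x => p * (q + 1) * q + q * (p + 1) * p * x ^ 2 with hA
  set B : ℝ → ℝ := fun x => -(p * q * (n + 2)) * x with hB
  set D : ℝ → ℝ := fun x => q * (p + 1) * p + p * (q + 1) * q * x ^ 2 with hD
  set R : ℝ → ℝ := fun x => a1 x * (A x * g1 x + B x * g2 x) + a2 x * (B x * g1 x + D x * g2 x)
    - (c1 x * (A x * f1 x + B x * f2 x) + c2 x * (B x * f1 x + D x * f2 x)) with hR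
  set R' : ℝ → ℝ := fun x =>
    b1 x * (A x * g1 x + B x * g2 x) + b2 x * (B x * g1 x + D x * g2 x)
    - (d1 x * (A x * f1 x + B x * f2 x) + d2 x * (B x * f1 x + D x * f2 x))
    + a1 x * (2 * (q * (p + 1) * p) * x * g1 x + -(p * q * (n + 2)) * g2 x)
    + a2 x * (-(p * q * (n + 2)) * g1 x + 2 * (p * (q + 1) * q) * x * g2 x)
    - c1 x * (2 * (q * (p + 1) * p) * x * f1 x + -(p * q * (n + 2)) * f2 x)
    - c2 x * (-(p * q * (n + 2)) * f1 x + 2 * (p * (q + 1) * q) * x * f2 x) with hR'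
  have dA : ∀ x, HasDerivAt A (2 * (q * (p + 1) * p) * x) x := by
    intro x
    have := ((hasDerivAt_pow 2 x).const_mul (q * (p + 1) * p)).const_add (p * (q + 1) * q)
    refine this.congr_deriv ?_; norm_num; ring
  have dD : ∀ x, HasDerivAt D (2 * (p * (q + 1) * q) * x) x := by
    intro x
    have := ((hasDerivAt_pow 2 x).const_mul (p * (q + 1) * q)).const_add (q * (p + 1) * p)
    refine this.congr_deriv ?_; norm_num; ring
  have dB : ∀ x, HasDerivAt B (-(p * q * (n + 2))) x := by
    intro x
    have := (hasDerivAt_id' x).const_mul (-(p * q * (n + 2)))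
    refine this.congr_deriv ?_; ring
  have dR : ∀ x, HasDerivAt R (R' x) x := by
    intro x
    have t1 := (ha1 x).mul (((dA x).mul (hg1 x)).add ((dB x).mul (hg2 x)))
    have t2 := (ha2 x).mul (((dB x).mul (hg1 x)).add ((dD x).mul (hg2 x)))
    have t3 := (hc1 x).mul (((dA x).mul (hf1 x)).add ((dB x).mul (hf2 x)))
    have t4 := (hc2 x).mul (((dB x).mul (hf1 x)).add ((dD x).mul (hf2 x)))
    have t5 := (t1.add t2).sub (t3.add t4)
    refine t5.congr_deriv ?_
    simp only [hR', Pi.add_apply, Pi.mul_apply]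
    ring
  have cR : Continuous R := continuous_iff_continuousAt.2 fun x => (dR x).continuousAt
  have hcont : ContinuousOn (fun x : ℝ => (1 - x ^ 2) ^ (n / 2) * ((x - α) * R x))
      (Set.Icc (-1) α) := by
    apply ContinuousOn.mul
    · apply ContinuousOn.rpow_const (by fun_prop)
      intro x _
      right; positivity
    · fun_prop
  have hderiv : ∀ x ∈ Set.Ioo (-1) α,
      HasDerivAt (fun x : ℝ => (1 - x ^ 2) ^ (n / 2) * ((x - α) * R x))
      ((1 - x ^ 2) ^ (n / 2 - 1) *
      (bil n p x (h1 x) (h2 x) (g1 x) (g2 x) - bil n p x (f1 x) (f2 x) (k1 x) (k2 x))) x := by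
    intro x hx
    have hx1 := hx.1
    have hx2 : x < 1 := hx.2.trans hα.2
    have hpos : 0 < 1 - x ^ 2 := by nlinarith
    have h3 : HasDerivAt (fun x : ℝ => 1 - x ^ 2) (-(2 * x)) x := by
      simpa using (hasDerivAt_pow 2 x).const_sub 1
    have h4 := h3.rpow_const (p := n / 2) (Or.inl hpos.ne')
    have h5 := h4.mul (((hasDerivAt_id' x).sub_const α).mul (dR x))
    refine h5.congr_deriv ?_
    have h6 : (1 - x ^ 2) ^ (n / 2) = (1 - x ^ 2) ^ (n / 2 - 1) * (1 - x ^ 2) := by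
      rw [Real.rpow_sub_one hpos.ne']
      field_simp
    rw [h6]
    simp only [hh1, hh2, hk1, hk2, Pi.mul_apply]
    generalize (1 - x ^ 2) ^ (n / 2 - 1) = w
    simp only [bil, op1, op2, hR, hR', hA, hB, hD]
    generalize f1 x = f1, f2 x = f2, g1 x = g1, g2 x = g2, a1 x = a1, a2 x = a2, b1 x = b1,
      b2 x = b2, c1 x = c1, c2 x = c2, d1 x = d1, d2 x = d2
    have hq : q = n - p := by linarith
    subst hq
    ring
  have hIntg : IntervalIntegrable (fun x : ℝ => (1 - x ^ 2) ^ (n / 2 - 1) *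
      (bil n p x (h1 x) (h2 x) (g1 x) (g2 x) - bil n p x (f1 x) (f2 x) (k1 x) (k2 x)))
      MeasureTheory.volume (-1) α := by
    apply (wt_integrable (n / 2 - 1) α (by linarith) hα).mul_continuousOn
    apply Continuous.continuousOn
    simp only [hh1, hh2, hk1, hk2, bil, op1, op2]
    fun_prop
  rw [intervalIntegral.integral_eq_sub_of_hasDerivAt_of_le hα.1.le hcont hderiv hIntg]
  have : (0 : ℝ) ^ (n / 2) = 0 := Real.zero_rpow (by positivity)
  norm_num [this]

/-- square of the scalar factor of `S_w` -/
noncomputable def s2 (n w : ℕ) : ℝ :=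
  ((w.factorial : ℝ) * ((n : ℝ) + 1) * ((n : ℝ) + 2 * w + 1) *
        Real.Gamma ((n : ℝ) / 2 + 3 / 2)) /
      (Real.sqrt Real.pi * 2 ^ (w / 2) * Real.Gamma ((n : ℝ) / 2 + 1 + (w / 2 : ℕ)) *
        ∏ k ∈ Finset.range ((w + 1) / 2), ((n : ℝ) + 2 * k + 1))

/-- diagonal entries of `S_w` -/
noncomputable def sg (n : ℕ) (p q : ℝ) (w : ℕ) : ℝ :=
  Real.sqrt (s2 n w) * Real.sqrt ((p + w) / (p * (q + w + 1)))

lemma s2_pos (n w : ℕ) : 0 < s2 n w := by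
  unfold s2
  have h1 : 0 < Real.Gamma ((n : ℝ) / 2 + 3 / 2) := Real.Gamma_pos_of_pos (by positivity)
  have h2 : 0 < Real.Gamma ((n : ℝ) / 2 + 1 + (w / 2 : ℕ)) := Real.Gamma_pos_of_pos (by positivity)
  have h3 : 0 < ∏ k ∈ Finset.range ((w + 1) / 2), ((n : ℝ) + 2 * k + 1) :=
    Finset.prod_pos fun i _ => by positivity
  have := Real.pi_pos
  positivity

lemma s2_succ (n w : ℕ) : s2 n (w + 1) * (((n : ℝ) + 2 * w + 1) * (n + w + 1)) =
    s2 n w * ((w + 1) * (n + 2 * w + 3)) := by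
  have h1 : 0 < Real.Gamma ((n : ℝ) / 2 + 3 / 2) := Real.Gamma_pos_of_pos (by positivity)
  have h0 : 0 < Real.sqrt Real.pi := Real.sqrt_pos.2 Real.pi_pos
  have h4 : (0 : ℝ) < w.factorial := by positivity
  rcases Nat.even_or_odd' w with ⟨m, rfl | rfl⟩
  · have e1 : (2 * m + 1) / 2 = m := by omega
    have e2 : 2 * m / 2 = m := by omega
    have e3 : (2 * m + 1 + 1) / 2 = m + 1 := by omega
    unfold s2
    rw [e1, e2, e3, Finset.prod_range_succ, Nat.factorial_succ]
    have h2 : 0 < Real.Gamma ((n : ℝ) / 2 + 1 + m) := Real.Gamma_pos_of_pos (by positivity)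
    have h3 : 0 < ∏ k ∈ Finset.range m, ((n : ℝ) + 2 * k + 1) :=
      Finset.prod_pos fun i _ => by positivity
    have h5 : (n : ℝ) + 2 * m + 1 ≠ 0 := by positivity
    push_cast
    generalize ∏ k ∈ Finset.range m, ((n : ℝ) + 2 * k + 1) = P at *
    generalize Real.Gamma ((n : ℝ) / 2 + 1 + m) = G at *
    generalize Real.Gamma ((n : ℝ) / 2 + 3 / 2) = H at *
    generalize Real.sqrt Real.pi = S at *
    generalize ((2 * m).factorial : ℝ) = F at *
    field_simp
    ring
  · have e1 : (2 * m + 1) / 2 = m := by omega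
    have e3 : (2 * m + 1 + 1) / 2 = m + 1 := by omega
    have e2 : (2 * m + 1 + 1 + 1) / 2 = m + 1 := by omega
    unfold s2
    rw [e2, e3, e1, Nat.factorial_succ (2 * m + 1)]
    have h2 : 0 < Real.Gamma ((n : ℝ) / 2 + 1 + m) := Real.Gamma_pos_of_pos (by positivity)
    have h6 : Real.Gamma ((n : ℝ) / 2 + 1 + ((m + 1 : ℕ) : ℝ)) =
        ((n : ℝ) / 2 + 1 + m) * Real.Gamma ((n : ℝ) / 2 + 1 + m) := by
      rw [← Real.Gamma_add_one (by positivity)]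
      push_cast; congr 1; ring
    rw [h6]
    have h3 : 0 < ∏ k ∈ Finset.range (m + 1), ((n : ℝ) + 2 * k + 1) :=
      Finset.prod_pos fun i _ => by positivity
    have h5 : (n : ℝ) / 2 + 1 + m ≠ 0 := by positivity
    push_cast
    generalize ∏ k ∈ Finset.range (m + 1), ((n : ℝ) + 2 * k + 1) = P at *
    generalize Real.Gamma ((n : ℝ) / 2 + 1 + m) = G at *
    generalize Real.Gamma ((n : ℝ) / 2 + 3 / 2) = H at *
    generalize Real.sqrt Real.pi = S at *
    generalize ((2 * m + 1).factorial : ℝ) = F at *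
    field_simp
    ring

lemma sqrt_rel (A X Y c : ℝ) (hA : 0 ≤ A) (hc : 0 ≤ c) (h : A * X = c ^ 2 * Y) :
    Real.sqrt A * Real.sqrt X = c * Real.sqrt Y := by
  rw [← Real.sqrt_mul hA, h, Real.sqrt_mul (by positivity), Real.sqrt_sq hc]

lemma sg_eq (n : ℕ) (p q : ℝ) (w : ℕ) :
    sg n p q w = Real.sqrt (s2 n w * ((p + w) / (p * (q + w + 1)))) := by
  rw [sg, Real.sqrt_mul (s2_pos n w).le]

/-- the root in `e`, `f` -/
noncomputable def eroot (n : ℕ) (p q : ℝ) (w : ℕ) : ℝ :=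
  Real.sqrt (((w : ℝ) + 1) * (p + w) * (q + w + 2) * (n + w + 1) /
    ((n + 2 * w + 1) * (n + 2 * w + 3) * (p + w + 1) * (q + w + 1)))

lemma eroot_up (n : ℕ) (p q : ℝ) (w : ℕ) (hp : 0 < p) (hq : 0 < q) :
    eroot n p q w * sg n p q (w + 1) = (w + 1) / (n + 2 * w + 1) * sg n p q w := by
  rw [sg_eq, sg_eq]
  apply sqrt_rel _ _ _ _ (by positivity) (by positivity)
  have h := s2_succ n w
  have h' : s2 n (w + 1) = s2 n w * ((w + 1) * (n + 2 * w + 3)) /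
    (((n : ℝ) + 2 * w + 1) * (n + w + 1)) := by
    field_simp
    linear_combination h
  rw [h']
  have h1 : p + w ≠ 0 := by positivity
  have h2 : q + w + 1 ≠ 0 := by positivity
  have h3 : p + w + 1 ≠ 0 := by positivity
  have h4 : q + w + 2 ≠ 0 := by positivity
  push_cast
  rw [show p + ((w : ℝ) + 1) = p + w + 1 by ring, show q + ((w : ℝ) + 1) + 1 = q + w + 2 by ring]
  field_simp

lemma eroot_down (n : ℕ) (p q : ℝ) (w : ℕ) (hp : 0 < p) (hq : 0 < q) :
    eroot n p q w * sg n p q w = (p + w) * (q + w + 2) * (n + w + 1) /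
      ((n + 2 * w + 3) * (p + w + 1) * (q + w + 1)) * sg n p q (w + 1) := by
  rw [sg_eq, sg_eq]
  apply sqrt_rel _ _ _ _ (by positivity) (by positivity)
  have h := s2_succ n w
  have h' : s2 n (w + 1) = s2 n w * ((w + 1) * (n + 2 * w + 3)) /
    (((n : ℝ) + 2 * w + 1) * (n + w + 1)) := by
    field_simp
    linear_combination h
  rw [h']
  have h1 : p + w ≠ 0 := by positivity
  have h2 : q + w + 1 ≠ 0 := by positivity
  have h3 : p + w + 1 ≠ 0 := by positivity
  have h4 : q + w + 2 ≠ 0 := by positivity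
  push_cast
  rw [show p + ((w : ℝ) + 1) = p + w + 1 by ring, show q + ((w : ℝ) + 1) + 1 = q + w + 2 by ring]
  field_simp

lemma L3e_eq (n : ℕ) (p α : ℝ) (N w : ℕ) : L3e n p α N (w + 1) =
    ((N : ℝ) - w) * (N + n + w + 2) / (α * (n + 2)) * eroot n p (n - p) w := by
  unfold L3e eroot
  push_cast
  congr 1
  · ring
  · congr 1; congr 1 <;> ring

lemma L3f_eq (n : ℕ) (p α : ℝ) (N w : ℕ) : L3f n p α N (w + 1) =
    p * ((n : ℝ) - p + 1) * ((N : ℝ) - w) * (N + n + w + 2) /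
      (α * (n + 2) * (n - p) * (p + 1)) * eroot n (n - p) p w := by
  unfold L3f eroot
  push_cast
  congr 1
  · ring
  · congr 1; congr 1 <;> ring

lemma b_rel (n : ℕ) (p q : ℝ) (w : ℕ) (hp : 0 < p) (hq : 0 < q) :
    Real.sqrt p / Real.sqrt (q * (p + w) * (p + w + 1) * (q + w + 1) * (q + w)) * sg n q p w =
      p / (q * (p + w) * (p + w + 1)) * sg n p q w := by
  rw [sg_eq, sg_eq, ← Real.sqrt_div hp.le]
  apply sqrt_rel _ _ _ _ (by positivity) (by positivity)
  have h1 : p + w ≠ 0 := by positivity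
  have h2 : q + w + 1 ≠ 0 := by positivity
  have h3 : p + w + 1 ≠ 0 := by positivity
  have h4 : q + w ≠ 0 := by positivity
  field_simp

lemma b_rel' (n : ℕ) (p q : ℝ) (w : ℕ) (hp : 0 < p) (hq : 0 < q) :
    Real.sqrt p / Real.sqrt (q * (p + w) * (p + w + 1) * (q + w + 1) * (q + w)) * sg n p q w =
      1 / ((q + w) * (q + w + 1)) * sg n q p w := by
  rw [sg_eq, sg_eq, ← Real.sqrt_div hp.le]
  apply sqrt_rel _ _ _ _ (by positivity) (by positivity)
  have h1 : p + w ≠ 0 := by positivity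
  have h2 : q + w + 1 ≠ 0 := by positivity
  have h3 : p + w + 1 ≠ 0 := by positivity
  have h4 : q + w ≠ 0 := by positivity
  field_simp

lemma L3b_eq (n : ℕ) (p α : ℝ) (N w : ℕ) : L3b n p α N (w + 1) =
    (w : ℝ) * (n - p + N + 1) * (p + N + 1) * (n + w + 1) / (α * (p + 1) * (n + 2)) *
     (Real.sqrt p / Real.sqrt ((n - p) * (p + w) * (p + w + 1) * (n - p + w + 1) * (n - p + w))) := by
  unfold L3b
  push_cast
  rw [div_mul_div_comm]
  congr 1
  · ring
  · congr 1; congr 1; ring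

/-- `L_3` on natural-number (0-based) indices -/
noncomputable def Lnat (n : ℕ) (p α : ℝ) (N : ℕ) (i j : ℕ) : ℝ :=
    let r := i + 1
    let s := j + 1
    if r = s then (if r % 2 = 0 then L3dE n p (r / 2) else L3dO n ((r + 1) / 2))
    else if s = r + 1 ∧ r % 2 = 1 then L3b n p α N (s / 2)
    else if r = s + 1 ∧ s % 2 = 1 then L3b n p α N (r / 2)
    else if s = r + 2 ∧ r % 2 = 1 then L3e n p α N ((r + 1) / 2)
    else if r = s + 2 ∧ s % 2 = 1 then L3e n p α N ((s + 1) / 2)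
    else if s = r + 2 ∧ r % 2 = 0 then L3f n p α N (r / 2)
    else if r = s + 2 ∧ s % 2 = 0 then L3f n p α N (s / 2)
    else 0

lemma Lnat_symm (n : ℕ) (p α : ℝ) (N i j : ℕ) : Lnat n p α N i j = Lnat n p α N j i := by
  unfold Lnat
  dsimp only
  by_cases h : i = j
  · subst h; rfl
  · split_ifs <;> first | rfl | (exfalso; omega)

lemma Lnat_even (n : ℕ) (p α : ℝ) (N w s : ℕ) : Lnat n p α N (2 * w) s =
    (if s = 2 * w then L3dO n (w + 1) else 0) + (if s = 2 * w + 1 then L3b n p α N (w + 1) else 0) +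
    (if s = 2 * w + 2 then L3e n p α N (w + 1) else 0) +
    (if s + 2 = 2 * w then L3e n p α N w else 0) := by
  unfold Lnat
  dsimp only
  by_cases h1 : s = 2 * w
  · subst h1
    rw [if_pos rfl, if_neg (by omega), if_pos rfl, if_neg (by omega), if_neg (by omega),
      if_neg (by omega), show (2 * w + 1 + 1) / 2 = w + 1 by omega]; ring
  by_cases h2 : s = 2 * w + 1
  · subst h2
    rw [if_neg (by omega), if_pos (by omega), if_neg (by omega), if_pos rfl, if_neg (by omega),
      if_neg (by omega), show (2 * w + 1 + 1) / 2 = w + 1 by omega]; ring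
  by_cases h3 : s = 2 * w + 2
  · subst h3
    rw [if_neg (by omega), if_neg (by omega), if_neg (by omega), if_pos (by omega),
      if_neg (by omega), if_neg (by omega), if_pos rfl,
      if_neg (by omega), show (2 * w + 1 + 1) / 2 = w + 1 by omega]; ring
  by_cases h4 : s + 2 = 2 * w
  · rw [if_neg (by omega), if_neg (by omega), if_neg (by omega), if_neg (by omega),
      if_pos (by omega), if_neg (by omega), if_neg (by omega),
      if_neg (by omega), if_pos h4, show (s + 1 + 1) / 2 = w by omega]; ring
  rw [if_neg (by omega), if_neg (by omega), if_neg (by omega), if_neg (by omega),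
      if_neg (by omega), if_neg (by omega), if_neg (by omega),
      if_neg (by omega), if_neg (by omega), if_neg (by omega), if_neg (by omega)]; ring

lemma Lnat_odd (n : ℕ) (p α : ℝ) (N w s : ℕ) : Lnat n p α N (2 * w + 1) s =
    (if s = 2 * w + 1 then L3dE n p (w + 1) else 0) + (if s = 2 * w then L3b n p α N (w + 1) else 0) +
    (if s = 2 * w + 3 then L3f n p α N (w + 1) else 0) +
    (if s + 1 = 2 * w then L3f n p α N w else 0) := by
  unfold Lnat
  dsimp only
  by_cases h1 : s = 2 * w + 1
  · subst h1
    rw [if_pos rfl, if_pos (by omega), if_pos rfl, if_neg (by omega), if_neg (by omega),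
      if_neg (by omega), show (2 * w + 1 + 1) / 2 = w + 1 by omega]; ring
  by_cases h2 : s = 2 * w
  · subst h2
    rw [if_neg (by omega), if_neg (by omega), if_pos (by omega), if_neg (by omega), if_pos rfl,
      if_neg (by omega),
      if_neg (by omega), show (2 * w + 1 + 1) / 2 = w + 1 by omega]; ring
  by_cases h3 : s = 2 * w + 3
  · subst h3
    rw [if_neg (by omega), if_neg (by omega), if_neg (by omega), if_neg (by omega),
      if_neg (by omega), if_pos (by omega), if_neg (by omega), if_neg (by omega), if_pos rfl,
      if_neg (by omega), show (2 * w + 1 + 1) / 2 = w + 1 by omega]; ring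
  by_cases h4 : s + 1 = 2 * w
  · rw [if_neg (by omega), if_neg (by omega), if_neg (by omega), if_neg (by omega),
      if_neg (by omega), if_neg (by omega), if_pos (by omega), if_neg (by omega), if_neg (by omega),
      if_neg (by omega), if_pos h4, show (s + 1) / 2 = w by omega]; ring
  rw [if_neg (by omega), if_neg (by omega), if_neg (by omega), if_neg (by omega),
      if_neg (by omega), if_neg (by omega), if_neg (by omega),
      if_neg (by omega), if_neg (by omega), if_neg (by omega), if_neg (by omega)]; ring

lemma L3e_end (n : ℕ) (p α : ℝ) (N : ℕ) : L3e n p α N (N + 1) = 0 := by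
  rw [L3e_eq]; simp

lemma L3f_end (n : ℕ) (p α : ℝ) (N : ℕ) : L3f n p α N (N + 1) = 0 := by
  rw [L3f_eq]; simp

lemma sum_pick (M t : ℕ) (a : ℝ) (f : ℕ → ℝ) (h : t < M ∨ a = 0) :
    ∑ s ∈ Finset.range M, (if s = t then a else 0) * f s = a * f t := by
  rcases h with h | h
  · rw [Finset.sum_eq_single t]
    · simp
    · intro b _ hb; simp [hb]
    · intro hb; exact absurd (Finset.mem_range.2 h) hb
  · simp [h]

lemma sum_even0 (n : ℕ) (p α : ℝ) (N : ℕ) (f : ℕ → ℝ) :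
    ∑ s ∈ Finset.range (2 * (N + 1)), Lnat n p α N (2 * 0) s * f s =
      L3dO n (0 + 1) * f (2 * 0) + L3b n p α N (0 + 1) * f (2 * 0 + 1) +
        L3e n p α N (0 + 1) * f (2 * 0 + 2) := by
  simp only [Lnat_even, add_mul, Finset.sum_add_distrib]
  rw [sum_pick _ _ _ _ (Or.inl (by omega)), sum_pick _ _ _ _ (Or.inl (by omega)), sum_pick]
  · simp
  · rcases Nat.eq_zero_or_pos N with h | h
    · right; subst h; exact L3e_end n p α 0
    · left; omega

lemma sum_even1 (n : ℕ) (p α : ℝ) (N v : ℕ) (hv : v + 1 ≤ N) (f : ℕ → ℝ) :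
    ∑ s ∈ Finset.range (2 * (N + 1)), Lnat n p α N (2 * (v + 1)) s * f s =
      L3dO n (v + 1 + 1) * f (2 * (v + 1)) + L3b n p α N (v + 1 + 1) * f (2 * (v + 1) + 1) +
        L3e n p α N (v + 1 + 1) * f (2 * (v + 1) + 2) + L3e n p α N (v + 1) * f (2 * v) := by
  have h : ∀ s, (s + 2 = 2 * (v + 1)) = (s = 2 * v) := by intro s; apply propext; omega
  simp only [Lnat_even, add_mul, Finset.sum_add_distrib, h]
  rw [sum_pick _ _ _ _ (Or.inl (by omega)), sum_pick _ _ _ _ (Or.inl (by omega)), sum_pick,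
    sum_pick _ _ _ _ (Or.inl (by omega))]
  rcases Nat.eq_or_lt_of_le hv with h | h
  · right; subst h; exact L3e_end n p α _
  · left; omega

lemma sum_odd0 (n : ℕ) (p α : ℝ) (N : ℕ) (f : ℕ → ℝ) :
    ∑ s ∈ Finset.range (2 * (N + 1)), Lnat n p α N (2 * 0 + 1) s * f s =
      L3dE n p (0 + 1) * f (2 * 0 + 1) + L3b n p α N (0 + 1) * f (2 * 0) +
        L3f n p α N (0 + 1) * f (2 * 0 + 3) := by
  simp only [Lnat_odd, add_mul, Finset.sum_add_distrib]
  rw [sum_pick _ _ _ _ (Or.inl (by omega)), sum_pick _ _ _ _ (Or.inl (by omega)), sum_pick]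
  · simp
  · rcases Nat.eq_zero_or_pos N with h | h
    · right; subst h; exact L3f_end n p α 0
    · left; omega

lemma sum_odd1 (n : ℕ) (p α : ℝ) (N v : ℕ) (hv : v + 1 ≤ N) (f : ℕ → ℝ) :
    ∑ s ∈ Finset.range (2 * (N + 1)), Lnat n p α N (2 * (v + 1) + 1) s * f s =
      L3dE n p (v + 1 + 1) * f (2 * (v + 1) + 1) + L3b n p α N (v + 1 + 1) * f (2 * (v + 1)) +
        L3f n p α N (v + 1 + 1) * f (2 * (v + 1) + 3) + L3f n p α N (v + 1) * f (2 * v + 1) := by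
  have h : ∀ s, (s + 1 = 2 * (v + 1)) = (s = 2 * v + 1) := by intro s; apply propext; omega
  simp only [Lnat_odd, add_mul, Finset.sum_add_distrib, h]
  rw [sum_pick _ _ _ _ (Or.inl (by omega)), sum_pick _ _ _ _ (Or.inl (by omega)), sum_pick,
    sum_pick _ _ _ _ (Or.inl (by omega))]
  rcases Nat.eq_or_lt_of_le hv with h | h
  · right; subst h; exact L3f_end n p α _
  · left; omega

/-- components of the rows of `Q_w` -/
noncomputable def ph1 (n : ℕ) (p : ℝ) (r : ℕ) (x : ℝ) : ℝ :=
  if r % 2 = 0 then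
    sg n p (n - p) (r / 2) * ((p * cj0 n (r / 2) x + x * cj1 n (r / 2) x) / (p + (r / 2 : ℕ)))
  else sg n (n - p) p (r / 2) * (cj1 n (r / 2) x / (n - p + (r / 2 : ℕ)))

noncomputable def ph2 (n : ℕ) (p : ℝ) (r : ℕ) (x : ℝ) : ℝ :=
  if r % 2 = 0 then sg n p (n - p) (r / 2) * (cj1 n (r / 2) x / (p + (r / 2 : ℕ)))
  else sg n (n - p) p (r / 2) *
    (((n - p) * cj0 n (r / 2) x + x * cj1 n (r / 2) x) / (n - p + (r / 2 : ℕ)))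

lemma ph1_even (n : ℕ) (p : ℝ) (w : ℕ) (x : ℝ) : ph1 n p (2 * w) x =
    sg n p (n - p) w * ((p * cj0 n w x + x * cj1 n w x) / (p + w)) := by
  rw [ph1, if_pos (by omega), show 2 * w / 2 = w by omega]

lemma ph1_odd (n : ℕ) (p : ℝ) (w : ℕ) (x : ℝ) : ph1 n p (2 * w + 1) x =
    sg n (n - p) p w * (cj1 n w x / (n - p + w)) := by
  rw [ph1, if_neg (by omega), show (2 * w + 1) / 2 = w by omega]

lemma ph2_even (n : ℕ) (p : ℝ) (w : ℕ) (x : ℝ) : ph2 n p (2 * w) x =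
    sg n p (n - p) w * (cj1 n w x / (p + w)) := by
  rw [ph2, if_pos (by omega), show 2 * w / 2 = w by omega]

lemma ph2_odd (n : ℕ) (p : ℝ) (w : ℕ) (x : ℝ) : ph2 n p (2 * w + 1) x =
    sg n (n - p) p w * (((n - p) * cj0 n w x + x * cj1 n w x) / (n - p + w)) := by
  rw [ph2, if_neg (by omega), show (2 * w + 1) / 2 = w by omega]

lemma good_swap (p q n N α : ℝ) (f1 f2 h1 h2 : ℝ → ℝ) (h : Good q p n N α f2 f1 h2 h1) :
    Good p q n N α f1 f2 h1 h2 := by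
  obtain ⟨a1, a2, b1, b2, hf1, hf2, ha1, ha2, hb1, hb2, hh1, hh2⟩ := h
  refine ⟨a2, a1, b2, b1, hf2, hf1, ha2, ha1, hb2, hb1, ?_, ?_⟩
  · intro x; rw [hh2]; unfold op1 op2; ring
  · intro x; rw [hh1]; unfold op1 op2; ring

lemma good_row (n : ℕ) (p q N α σ : ℝ) (w : ℕ) (hp : 0 < p) (hq : 0 < q) (hn : (n : ℝ) = p + q)
    (d0 d1 h1 h2 : ℝ → ℝ)
    (hd0 : ∀ x, ((w : ℝ) + n) * d0 x = w * x * cj0 n w x + (1 - x ^ 2) * cj1 n w x)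
    (hd1 : ∀ x, d1 x = x * cj1 n w x - w * cj0 n w x)
    (hh1 : ∀ x, h1 x = σ * (
      q * (p + 1) * ((N - w) * (N + n + w + 2) * (w + 1) / (n + 2 * w + 1)) *
        ((p * cj0 n (w + 1) x + x * cj1 n (w + 1) x) / (p + w + 1)) +
      q * (p + 1) * ((N - w + 1) * (N + n + w + 1) * (n + w) * (q + w + 1) /
        ((n + 2 * w + 1) * (p + w) * (q + w))) * (p * d0 x + x * d1 x) +
      q * (p + 1) * α * (w * (n + w + 1)) * ((p * cj0 n w x + x * cj1 n w x) / (p + w)) +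
      w * (n + w + 1) * (q + N + 1) * (p + N + 1) * p / ((p + w) * (p + w + 1)) *
        (cj1 n w x / (q + w))))
    (hh2 : ∀ x, h2 x = σ * (
      q * (p + 1) * ((N - w) * (N + n + w + 2) * (w + 1) / (n + 2 * w + 1)) *
        (cj1 n (w + 1) x / (p + w + 1)) +
      q * (p + 1) * ((N - w + 1) * (N + n + w + 1) * (n + w) * (q + w + 1) /
        ((n + 2 * w + 1) * (p + w) * (q + w))) * d1 x +
      q * (p + 1) * α * (w * (n + w + 1)) * (cj1 n w x / (p + w)) +
      w * (n + w + 1) * (q + N + 1) * (p + N + 1) * p / ((p + w) * (p + w + 1)) *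
        ((q * cj0 n w x + x * cj1 n w x) / (q + w)))) :
    Good p q n N α (fun x => σ * ((p * cj0 n w x + x * cj1 n w x) / (p + w)))
      (fun x => σ * (cj1 n w x / (p + w))) h1 h2 := by
  have hup1 : ∀ x, cj1 n (w + 1) x = x * cj1 n w x + (w + n + 1) * cj0 n w x := rec_up1 n w
  refine ⟨fun x => σ * (((p + 1) * cj1 n w x + x * cj2 n w x) / (p + w)),
    fun x => σ * (cj2 n w x / (p + w)),
    fun x => σ * (((p + 2) * cj2 n w x + x * cj3 n w x) / (p + w)),
    fun x => σ * (cj3 n w x / (p + w)), ?_, ?_, ?_, ?_, ?_, ?_, ?_, ?_⟩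
  · intro x
    have := ((((cj0_deriv n w x).const_mul p).add
      ((hasDerivAt_id' x).mul (cj1_deriv n w x))).div_const (p + w)).const_mul σ
    refine this.congr_deriv ?_
    ring
  · intro x
    exact ((cj1_deriv n w x).div_const (p + w)).const_mul σ
  · intro x
    have := ((((cj1_deriv n w x).const_mul (p + 1)).add
      ((hasDerivAt_id' x).mul (cj2_deriv n w x))).div_const (p + w)).const_mul σ
    refine this.congr_deriv ?_
    ring
  · intro x
    exact ((cj2_deriv n w x).div_const (p + w)).const_mul σ
  · have h2 : Continuous (cj2 n w) := Polynomial.continuous _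
    have h3 : Continuous (cj3 n w) := Polynomial.continuous _
    fun_prop
  · have h3 : Continuous (cj3 n w) := Polynomial.continuous _
    fun_prop
  · intro x
    rw [hh1, opid1 p q n w N α x (cj0 n w x) (cj1 n w x) (cj2 n w x) (cj3 n w x) (cj0 n (w + 1) x)
      (cj1 n (w + 1) x) (d0 x) (d1 x) hp hq hn (by positivity) (ode2 n w x) (ode3 n w x)
      (rec_up0 n w x) (rec_up1 n w x) (hd0 x) (hd1 x)]
    unfold op1
    ring
  · intro x
    rw [hh2, opid2 p q n w N α x (cj0 n w x) (cj1 n w x) (cj2 n w x) (cj3 n w x) (cj0 n (w + 1) x)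
      (cj1 n (w + 1) x) (d0 x) (d1 x) hp hq hn (by positivity) (ode2 n w x) (ode3 n w x)
      (rec_up1 n w x) (hd1 x)]
    unfold op2
    ring

/-- overall scaling -/
noncomputable def scal (n : ℕ) (p α : ℝ) : ℝ := α * (n + 2) * ((n - p) * (p + 1))

lemma co_dO (n : ℕ) (p α : ℝ) (w : ℕ) :
    scal n p α * L3dO n (w + 1) = (n - p) * (p + 1) * α * (w * (n + w + 1)) := by
  unfold scal L3dO
  have : (n : ℝ) + 2 ≠ 0 := by positivity
  push_cast
  field_simp
  ring

lemma co_dE (n : ℕ) (p α : ℝ) (w : ℕ) (hp : 0 < p) (hq : 0 < (n : ℝ) - p) :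
    scal n p α * L3dE n p (w + 1) = p * (n - p + 1) * α * (w * (n + w + 1)) := by
  unfold scal L3dE
  have : (n : ℝ) + 2 ≠ 0 := by positivity
  have h2 : p + 1 ≠ 0 := by positivity
  have h3 := hq.ne'
  push_cast
  field_simp
  ring

lemma co_e (n : ℕ) (p α : ℝ) (N w : ℕ) (hα0 : α ≠ 0) :
    scal n p α * L3e n p α N (w + 1) =
      (n - p) * (p + 1) * ((N - w) * (N + n + w + 2)) * eroot n p (n - p) w := by
  rw [L3e_eq]
  unfold scal
  have : (n : ℝ) + 2 ≠ 0 := by positivity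
  field_simp

lemma co_f (n : ℕ) (p α : ℝ) (N w : ℕ) (hp : 0 < p) (hq : 0 < (n : ℝ) - p) (hα0 : α ≠ 0) :
    scal n p α * L3f n p α N (w + 1) =
      p * (n - p + 1) * ((N - w) * (N + n + w + 2)) * eroot n (n - p) p w := by
  rw [L3f_eq]
  unfold scal
  have : (n : ℝ) + 2 ≠ 0 := by positivity
  have h2 : p + 1 ≠ 0 := by positivity
  have h3 := hq.ne'
  field_simp

lemma co_b (n : ℕ) (p α : ℝ) (N w : ℕ) (hp : 0 < p) (hα0 : α ≠ 0) :
    scal n p α * L3b n p α N (w + 1) =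
      (n - p) * (w * (n - p + N + 1) * (p + N + 1) * (n + w + 1)) *
      (Real.sqrt p / Real.sqrt ((n - p) * (p + w) * (p + w + 1) * (n - p + w + 1) * (n - p + w))) := by
  rw [L3b_eq]
  unfold scal
  have : (n : ℝ) + 2 ≠ 0 := by positivity
  have h2 : p + 1 ≠ 0 := by positivity
  generalize Real.sqrt p / Real.sqrt _ = R
  field_simp

lemma good_even (n : ℕ) (p α : ℝ) (N w : ℕ) (hw : w ≤ N) (hp : 0 < p) (hpn : p < n)
    (hα0 : α ≠ 0) : Good p (n - p) n N α (ph1 n p (2 * w)) (ph2 n p (2 * w))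
      (fun x => scal n p α * ∑ s ∈ Finset.range (2 * (N + 1)), Lnat n p α N (2 * w) s * ph1 n p s x)
      (fun x => scal n p α *
        ∑ s ∈ Finset.range (2 * (N + 1)), Lnat n p α N (2 * w) s * ph2 n p s x) := by
  have hq : 0 < (n : ℝ) - p := by linarith
  have e1 : ph1 n p (2 * w) =
    fun x => sg n p (n - p) w * ((p * cj0 n w x + x * cj1 n w x) / (p + w)) :=
    funext fun x => ph1_even n p w x
  have e2 : ph2 n p (2 * w) = fun x => sg n p (n - p) w * (cj1 n w x / (p + w)) :=
    funext fun x => ph2_even n p w x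
  rw [e1, e2]
  have hup := eroot_up n p (n - p) w hp hq
  have hb := b_rel n p (n - p) w hp hq
  have cd := co_dO n p α w
  have ce := co_e n p α N w hα0
  have cb := co_b n p α N w hp hα0
  have hq0 := hq.ne'
  have k1 : p + w ≠ 0 := by positivity
  have k2 : p + w + 1 ≠ 0 := by positivity
  have k3 : (n : ℝ) - p + w ≠ 0 := by positivity
  have k4 : (n : ℝ) + 2 * w + 1 ≠ 0 := by positivity
  have kb : scal n p α * L3b n p α N (w + 1) * sg n (n - p) p w =
      w * (n + w + 1) * (n - p + N + 1) * (p + N + 1) * p / ((p + w) * (p + w + 1)) *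
        sg n p (n - p) w := by
    rw [cb, mul_assoc, hb]; field_simp
  have ke : scal n p α * L3e n p α N (w + 1) * sg n p (n - p) (w + 1) =
      (n - p) * (p + 1) * ((N - w) * (N + n + w + 2) * (w + 1) / (n + 2 * w + 1)) *
        sg n p (n - p) w := by
    rw [ce, mul_assoc, hup]; field_simp
  rcases w with _ | v
  · apply good_row n p (n - p) N α (sg n p (n - p) 0) 0 hp hq (by ring) (fun _ => 0) (fun _ => 0)
    · intro x; simp [cj1_zero]
    · intro x; simp [cj1_zero]
    · intro x
      rw [sum_even0, ph1_even, ph1_odd, show 2 * 0 + 2 = 2 * (0 + 1) by ring, ph1_even]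
      push_cast at *
      linear_combination (sg n p (n - p) 0 * ((p * cj0 n 0 x + x * cj1 n 0 x) / (p + 0))) * cd
        + (cj1 n 0 x / (n - p + 0)) * kb + ((p * cj0 n (0+1) x + x * cj1 n (0+1) x) / (p + 0 + 1)) * ke
    · intro x
      rw [sum_even0, ph2_even, ph2_odd, show 2 * 0 + 2 = 2 * (0 + 1) by ring, ph2_even]
      push_cast at *
      linear_combination (sg n p (n - p) 0 * ((cj1 n 0 x) / (p + 0))) * cd
        + (((n - p) * cj0 n 0 x + x * cj1 n 0 x) / (n - p + 0)) * kb +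
        ((cj1 n (0+1) x) / (p + 0 + 1)) * ke
  · have cdn := co_e n p α N v hα0
    have hdn := eroot_down n p (n - p) v hp hq
    have k5 : p + v ≠ 0 := by positivity
    have k6 : (n : ℝ) - p + v + 1 ≠ 0 := by positivity
    have k7 : p + v + 1 ≠ 0 := by positivity
    have k8 : (n : ℝ) + 2 * v + 3 ≠ 0 := by positivity
    have kd : scal n p α * L3e n p α N (v + 1) * sg n p (n - p) v =
        (p + v) * ((n - p) * (p + 1) * ((N - v) * (N + n + v + 2) * (n + v + 1) * (n - p + v + 2) /
          ((n + 2 * v + 3) * (p + v + 1) * (n - p + v + 1)))) * sg n p (n - p) (v + 1) := by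
      rw [cdn, mul_assoc, hdn]; field_simp
    apply good_row n p (n - p) N α (sg n p (n - p) (v + 1)) (v + 1) hp hq (by ring)
      (cj0 n v) (cj1 n v)
    · intro x; push_cast; linear_combination rec_d n v x
    · intro x; push_cast; linear_combination rec_b n v x
    · intro x
      rw [sum_even1 n p α N v hw, ph1_even, ph1_odd,
        show 2 * (v + 1) + 2 = 2 * (v + 1 + 1) by ring, ph1_even, ph1_even]
      push_cast at *
      have hX : (p * cj0 n v x + x * cj1 n v x) / (p + v) * (p + v) =
        p * cj0 n v x + x * cj1 n v x := by field_simp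
      linear_combination (sg n p (n - p) (v + 1) *
          ((p * cj0 n (v + 1) x + x * cj1 n (v + 1) x) / (p + (v + 1)))) * cd
        + (cj1 n (v + 1) x / (n - p + (v + 1))) * kb +
        ((p * cj0 n (v + 1 + 1) x + x * cj1 n (v + 1 + 1) x) / (p + (v + 1) + 1)) * ke +
        ((p * cj0 n v x + x * cj1 n v x) / (p + v)) * kd +
        ((n - p) * (p + 1) * ((N - v) * (N + n + v + 2) * (n + v + 1) * (n - p + v + 2) /
          ((n + 2 * v + 3) * (p + v + 1) * (n - p + v + 1)))) * sg n p (n - p) (v + 1) * hX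
    · intro x
      rw [sum_even1 n p α N v hw, ph2_even, ph2_odd,
        show 2 * (v + 1) + 2 = 2 * (v + 1 + 1) by ring, ph2_even, ph2_even]
      push_cast at *
      have hX : cj1 n v x / (p + v) * (p + v) = cj1 n v x := by field_simp
      linear_combination (sg n p (n - p) (v + 1) * (cj1 n (v + 1) x / (p + (v + 1)))) * cd
        + (((n - p) * cj0 n (v + 1) x + x * cj1 n (v + 1) x) / (n - p + (v + 1))) * kb +
        (cj1 n (v + 1 + 1) x / (p + (v + 1) + 1)) * ke +
        (cj1 n v x / (p + v)) * kd +
        ((n - p) * (p + 1) * ((N - v) * (N + n + v + 2) * (n + v + 1) * (n - p + v + 2) /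
          ((n + 2 * v + 3) * (p + v + 1) * (n - p + v + 1)))) * sg n p (n - p) (v + 1) * hX

lemma good_odd (n : ℕ) (p α : ℝ) (N w : ℕ) (hw : w ≤ N) (hp : 0 < p) (hpn : p < n)
    (hα0 : α ≠ 0) : Good p (n - p) n N α (ph1 n p (2 * w + 1)) (ph2 n p (2 * w + 1))
      (fun x => scal n p α *
        ∑ s ∈ Finset.range (2 * (N + 1)), Lnat n p α N (2 * w + 1) s * ph1 n p s x)
      (fun x => scal n p α *
        ∑ s ∈ Finset.range (2 * (N + 1)), Lnat n p α N (2 * w + 1) s * ph2 n p s x) := by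
  have hq : 0 < (n : ℝ) - p := by linarith
  have e1 : ph2 n p (2 * w + 1) =
    fun x => sg n (n - p) p w * (((n - p) * cj0 n w x + x * cj1 n w x) / (n - p + w)) :=
    funext fun x => ph2_odd n p w x
  have e2 : ph1 n p (2 * w + 1) = fun x => sg n (n - p) p w * (cj1 n w x / (n - p + w)) :=
    funext fun x => ph1_odd n p w x
  rw [e1, e2]
  apply good_swap
  have hup := eroot_up n (n - p) p w hq hp
  have hb := b_rel' n p (n - p) w hp hq
  have cd := co_dE n p α w hp hq
  have ce := co_f n p α N w hp hq hα0
  have cb := co_b n p α N w hp hα0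
  have hq0 := hq.ne'
  have k1 : p + w ≠ 0 := by positivity
  have k2 : (n : ℝ) - p + w + 1 ≠ 0 := by positivity
  have k3 : (n : ℝ) - p + w ≠ 0 := by positivity
  have k4 : (n : ℝ) + 2 * w + 1 ≠ 0 := by positivity
  have kb : scal n p α * L3b n p α N (w + 1) * sg n p (n - p) w =
      w * (n + w + 1) * (p + N + 1) * (n - p + N + 1) * (n - p) / ((n - p + w) * (n - p + w + 1)) *
        sg n (n - p) p w := by
    rw [cb, mul_assoc, hb]; field_simp
  have ke : scal n p α * L3f n p α N (w + 1) * sg n (n - p) p (w + 1) =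
      p * (n - p + 1) * ((N - w) * (N + n + w + 2) * (w + 1) / (n + 2 * w + 1)) *
        sg n (n - p) p w := by
    rw [ce, mul_assoc, hup]; field_simp
  rcases w with _ | v
  · apply good_row n (n - p) p N α (sg n (n - p) p 0) 0 hq hp (by ring) (fun _ => 0) (fun _ => 0)
    · intro x; simp [cj1_zero]
    · intro x; simp [cj1_zero]
    · intro x
      rw [sum_odd0, ph2_even, ph2_odd, show 2 * 0 + 3 = 2 * (0 + 1) + 1 by ring, ph2_odd]
      push_cast at *
      linear_combination
        (sg n (n - p) p 0 * (((n - p) * cj0 n 0 x + x * cj1 n 0 x) / (n - p + 0))) * cd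
        + (cj1 n 0 x / (p + 0)) * kb +
        (((n - p) * cj0 n (0+1) x + x * cj1 n (0+1) x) / (n - p + 0 + 1)) * ke
    · intro x
      rw [sum_odd0, ph1_even, ph1_odd, show 2 * 0 + 3 = 2 * (0 + 1) + 1 by ring, ph1_odd]
      push_cast at *
      linear_combination (sg n (n - p) p 0 * ((cj1 n 0 x) / (n - p + 0))) * cd
        + ((p * cj0 n 0 x + x * cj1 n 0 x) / (p + 0)) * kb +
        ((cj1 n (0+1) x) / (n - p + 0 + 1)) * ke
  · have cdn := co_f n p α N v hp hq hα0
    have hdn := eroot_down n (n - p) p v hq hp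
    have k5 : (n : ℝ) - p + v ≠ 0 := by positivity
    have k6 : (n : ℝ) - p + v + 1 ≠ 0 := by positivity
    have k7 : p + v + 1 ≠ 0 := by positivity
    have k8 : (n : ℝ) + 2 * v + 3 ≠ 0 := by positivity
    have kd : scal n p α * L3f n p α N (v + 1) * sg n (n - p) p v =
        (n - p + v) * (p * (n - p + 1) * ((N - v) * (N + n + v + 2) * (n + v + 1) * (p + v + 2) /
          ((n + 2 * v + 3) * (n - p + v + 1) * (p + v + 1)))) * sg n (n - p) p (v + 1) := by
      rw [cdn, mul_assoc, hdn]; field_simp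
    apply good_row n (n - p) p N α (sg n (n - p) p (v + 1)) (v + 1) hq hp (by ring)
      (cj0 n v) (cj1 n v)
    · intro x; push_cast; linear_combination rec_d n v x
    · intro x; push_cast; linear_combination rec_b n v x
    · intro x
      rw [sum_odd1 n p α N v hw, ph2_even, ph2_odd,
        show 2 * (v + 1) + 3 = 2 * (v + 1 + 1) + 1 by ring, ph2_odd, ph2_odd]
      push_cast at *
      have hX : ((n - p) * cj0 n v x + x * cj1 n v x) / (n - p + v) * (n - p + v) =
        (n - p) * cj0 n v x + x * cj1 n v x := by field_simp
      linear_combination (sg n (n - p) p (v + 1) *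
          (((n - p) * cj0 n (v + 1) x + x * cj1 n (v + 1) x) / (n - p + (v + 1)))) * cd
        + (cj1 n (v + 1) x / (p + (v + 1))) * kb +
        (((n - p) * cj0 n (v + 1 + 1) x + x * cj1 n (v + 1 + 1) x) / (n - p + (v + 1) + 1)) * ke +
        (((n - p) * cj0 n v x + x * cj1 n v x) / (n - p + v)) * kd +
        (p * (n - p + 1) * ((N - v) * (N + n + v + 2) * (n + v + 1) * (p + v + 2) /
          ((n + 2 * v + 3) * (n - p + v + 1) * (p + v + 1)))) * sg n (n - p) p (v + 1) * hX
    · intro x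
      rw [sum_odd1 n p α N v hw, ph1_even, ph1_odd,
        show 2 * (v + 1) + 3 = 2 * (v + 1 + 1) + 1 by ring, ph1_odd, ph1_odd]
      push_cast at *
      have hX : cj1 n v x / (n - p + v) * (n - p + v) = cj1 n v x := by field_simp
      linear_combination (sg n (n - p) p (v + 1) * (cj1 n (v + 1) x / (n - p + (v + 1)))) * cd
        + ((p * cj0 n (v + 1) x + x * cj1 n (v + 1) x) / (p + (v + 1))) * kb +
        (cj1 n (v + 1 + 1) x / (n - p + (v + 1) + 1)) * ke +
        (cj1 n v x / (n - p + v)) * kd +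
        (p * (n - p + 1) * ((N - v) * (N + n + v + 2) * (n + v + 1) * (p + v + 2) /
          ((n + 2 * v + 3) * (n - p + v + 1) * (p + v + 1)))) * sg n (n - p) p (v + 1) * hX

lemma good_all (n : ℕ) (p α : ℝ) (N r : ℕ) (hr : r < 2 * (N + 1)) (hp : 0 < p) (hpn : p < n)
    (hα0 : α ≠ 0) : Good p (n - p) n N α (ph1 n p r) (ph2 n p r)
      (fun x => scal n p α * ∑ s ∈ Finset.range (2 * (N + 1)), Lnat n p α N r s * ph1 n p s x)
      (fun x => scal n p α *
        ∑ s ∈ Finset.range (2 * (N + 1)), Lnat n p α N r s * ph2 n p s x) := by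
  rcases Nat.even_or_odd' r with ⟨w, rfl | rfl⟩
  · exact good_even n p α N w (by omega) hp hpn hα0
  · exact good_odd n p α N w (by omega) hp hpn hα0

lemma Q_entry1 (n : ℕ) (p : ℝ) (r : ℕ) (x : ℝ) (hp : 0 < p) (hpn : p < n) :
    Qmat n p (r / 2) x ⟨r % 2, by omega⟩ 0 = ph1 n p r x := by
  have hq : 0 < (n : ℝ) - p := by linarith
  have k1 : p + (r / 2 : ℕ) ≠ 0 := by positivity
  rcases Nat.mod_two_eq_zero_or_one r with h | h
  · have : (⟨r % 2, by omega⟩ : Fin 2) = 0 := by ext; simpa using h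
    rw [this, ph1, if_pos h]
    simp only [Qmat, Smat, Pmat, Matrix.smul_mul, Matrix.smul_apply, Matrix.diagonal_mul, smul_eq_mul]
    simp only [geg0, geg1, geg2, Matrix.cons_val_zero, Matrix.of_apply, Matrix.cons_val', sg, s2]
    field_simp
    ring
  · have : (⟨r % 2, by omega⟩ : Fin 2) = 1 := by ext; simpa using h
    rw [this, ph1, if_neg (by omega)]
    simp only [Qmat, Smat, Pmat, Matrix.smul_mul, Matrix.smul_apply, Matrix.diagonal_mul, smul_eq_mul]
    simp only [geg0, geg1, geg2, Matrix.cons_val_zero, Matrix.cons_val_one, Matrix.of_apply,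
      Matrix.cons_val', sg, s2]
    ring

lemma Q_entry2 (n : ℕ) (p : ℝ) (r : ℕ) (x : ℝ) (hp : 0 < p) (hpn : p < n) :
    Qmat n p (r / 2) x ⟨r % 2, by omega⟩ 1 = ph2 n p r x := by
  have hq : 0 < (n : ℝ) - p := by linarith
  have k1 : (n : ℝ) - p + (r / 2 : ℕ) ≠ 0 := by positivity
  rcases Nat.mod_two_eq_zero_or_one r with h | h
  · have : (⟨r % 2, by omega⟩ : Fin 2) = 0 := by ext; simpa using h
    rw [this, ph2, if_pos h]
    simp only [Qmat, Smat, Pmat, Matrix.smul_mul, Matrix.smul_apply, Matrix.diagonal_mul, smul_eq_mul]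
    simp only [geg0, geg1, geg2, Matrix.cons_val_zero, Matrix.cons_val_one, Matrix.of_apply,
      Matrix.cons_val', sg, s2]
    ring
  · have : (⟨r % 2, by omega⟩ : Fin 2) = 1 := by ext; simpa using h
    rw [this, ph2, if_neg (by omega)]
    simp only [Qmat, Smat, Pmat, Matrix.smul_mul, Matrix.smul_apply, Matrix.diagonal_mul, smul_eq_mul]
    simp only [geg0, geg1, geg2, Matrix.cons_val_zero, Matrix.cons_val_one, Matrix.of_apply,
      Matrix.cons_val', sg, s2]
    field_simp
    ring

/-- integrand of the entries of `M` -/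
noncomputable def Mg (n : ℕ) (p : ℝ) (r s : ℕ) (x : ℝ) : ℝ :=
  (1 - x ^ 2) ^ ((n : ℝ) / 2 - 1) * bil n p x (ph1 n p r x) (ph2 n p r x) (ph1 n p s x) (ph2 n p s x)

lemma Mfull_eq (n : ℕ) (p α : ℝ) (N : ℕ) (hp : 0 < p) (hpn : p < n)
    (r s : Fin (2 * (N + 1))) :
    Mfull n p α N r s = ∫ x in (-1 : ℝ)..α, Mg n p r.val s.val x := by
  simp only [Mfull, Mblk, Matrix.of_apply]
  congr 1
  ext x
  simp only [Matrix.mul_apply, Fin.sum_univ_two, Matrix.transpose_apply, Q_entry1 n p _ x hp hpn,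
    Q_entry2 n p _ x hp hpn, Wmat, Matrix.smul_apply, smul_eq_mul, Mg, bil]
  simp
  ring

lemma ph1_cont (n : ℕ) (p : ℝ) (r : ℕ) : Continuous (ph1 n p r) := by
  have h0 : Continuous (cj0 n (r / 2)) := Polynomial.continuous _
  have h1 : Continuous (cj1 n (r / 2)) := Polynomial.continuous _
  unfold ph1
  split_ifs <;> fun_prop

lemma ph2_cont (n : ℕ) (p : ℝ) (r : ℕ) : Continuous (ph2 n p r) := by
  have h0 : Continuous (cj0 n (r / 2)) := Polynomial.continuous _
  have h1 : Continuous (cj1 n (r / 2)) := Polynomial.continuous _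
  unfold ph2
  split_ifs <;> fun_prop

lemma Mg_int (n : ℕ) (hn : 1 ≤ n) (p α : ℝ) (hα : α ∈ Set.Ioo (-1 : ℝ) 1) (r s : ℕ) :
    IntervalIntegrable (Mg n p r s) MeasureTheory.volume (-1) α := by
  have hn' : (1 : ℝ) ≤ n := by exact_mod_cast hn
  have h := wt_integrable ((n : ℝ) / 2 - 1) α (by linarith) hα
  refine h.mul_continuousOn (Continuous.continuousOn ?_)
  have h1 := ph1_cont n p r
  have h2 := ph2_cont n p r
  have h3 := ph1_cont n p s
  have h4 := ph2_cont n p s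
  unfold bil
  fun_prop

lemma bil_suml (n p x c : ℝ) (S : Finset ℕ) (l f1 f2 : ℕ → ℝ) (g1 g2 : ℝ) :
    bil n p x (c * ∑ t ∈ S, l t * f1 t) (c * ∑ t ∈ S, l t * f2 t) g1 g2 =
      c * ∑ t ∈ S, l t * bil n p x (f1 t) (f2 t) g1 g2 := by
  have : ∀ t, l t * bil n p x (f1 t) (f2 t) g1 g2 =
      (l t * f1 t) * (g1 * (p * x ^ 2 + n - p) - n * x * g2) +
      (l t * f2 t) * (g2 * ((n - p) * x ^ 2 + p) - n * x * g1) := by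
    intro t; unfold bil; ring
  simp only [this, Finset.sum_add_distrib, ← Finset.sum_mul]
  unfold bil; ring

lemma bil_symm (n p x f1 f2 g1 g2 : ℝ) : bil n p x f1 f2 g1 g2 = bil n p x g1 g2 f1 f2 := by
  unfold bil; ring

lemma main_sum (n : ℕ) (hn : 1 ≤ n) (p : ℝ) (hp : 0 < p) (hpn : p < n)
    (N : ℕ) (α : ℝ) (hα : α ∈ Set.Ioo (-1 : ℝ) 1) (hα0 : α ≠ 0) (r s : ℕ)
    (hr : r < 2 * (N + 1)) (hs : s < 2 * (N + 1)) :
    ∑ t ∈ Finset.range (2 * (N + 1)), Lnat n p α N r t * ∫ x in (-1 : ℝ)..α, Mg n p t s x =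
    ∑ t ∈ Finset.range (2 * (N + 1)), Lnat n p α N s t * ∫ x in (-1 : ℝ)..α, Mg n p r t x := by
  have hn0 : (0 : ℝ) < n := by exact_mod_cast hn
  have hc : scal n p α ≠ 0 := by
    unfold scal
    have hq : (n : ℝ) - p ≠ 0 := by linarith [hpn] |> fun h : 0 < (n : ℝ) - p => h.ne'
    have h1 : (n : ℝ) + 2 ≠ 0 := by positivity
    have h2 : p + 1 ≠ 0 := by positivity
    exact mul_ne_zero (mul_ne_zero hα0 h1) (mul_ne_zero hq h2)
  have key := good_int p (n - p) n N α (by ring) hn0 hα _ _ _ _ _ _ _ _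
    (good_all n p α N r hr hp hpn hα0) (good_all n p α N s hs hp hpn hα0)
  have hi : ∀ a b (l : ℕ → ℝ), IntervalIntegrable (fun x => l a * Mg n p a b x)
      MeasureTheory.volume (-1) α := fun a b l => (Mg_int n hn p α hα a b).const_mul _
  have hi2 : ∀ a b (l : ℕ → ℝ), IntervalIntegrable (fun x => l b * Mg n p a b x)
      MeasureTheory.volume (-1) α := fun a b l => (Mg_int n hn p α hα a b).const_mul _
  have hj1 : IntervalIntegrable (fun x => ∑ t ∈ Finset.range (2 * (N + 1)),
      Lnat n p α N r t * Mg n p t s x) MeasureTheory.volume (-1) α := by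
    have := IntervalIntegrable.sum (Finset.range (2 * (N + 1)))
      (fun t _ => hi t s (Lnat n p α N r))
    refine this.congr ?_
    intro x _
    simp
  have hj2 : IntervalIntegrable (fun x => ∑ t ∈ Finset.range (2 * (N + 1)),
      Lnat n p α N s t * Mg n p r t x) MeasureTheory.volume (-1) α := by
    have := IntervalIntegrable.sum (Finset.range (2 * (N + 1)))
      (fun t _ => hi2 r t (Lnat n p α N s))
    refine this.congr ?_
    intro x _
    simp
  simp only [← intervalIntegral.integral_const_mul]
  rw [← intervalIntegral.integral_finsetSum (fun t _ => hi t s _),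
    ← intervalIntegral.integral_finsetSum (fun t _ => hi2 r t _), ← sub_eq_zero,
    ← intervalIntegral.integral_sub hj1 hj2]
  have key2 : scal n p α * ∫ x in (-1 : ℝ)..α,
      (∑ t ∈ Finset.range (2 * (N + 1)), Lnat n p α N r t * Mg n p t s x -
        ∑ t ∈ Finset.range (2 * (N + 1)), Lnat n p α N s t * Mg n p r t x) = 0 := by
    rw [← intervalIntegral.integral_const_mul, ← key]
    congr 1
    ext x
    rw [bil_suml, bil_symm _ _ _ (ph1 n p r x), bil_suml]
    have e1 : ∀ (l : ℕ → ℝ) (F : ℕ → ℝ) (W : ℝ), ∑ t ∈ Finset.range (2 * (N + 1)), l t * (W * F t) =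
        W * ∑ t ∈ Finset.range (2 * (N + 1)), l t * F t := by
      intro l F W
      rw [Finset.mul_sum]
      exact Finset.sum_congr rfl fun t _ => by ring
    unfold Mg
    simp only [bil_symm _ _ _ (ph1 n p r x)]
    rw [e1, e1]
    ring
  exact (mul_eq_zero.1 key2).resolve_left hc

/-- `L_3` commutes with `M`. -/
theorem stmt_11 (n : ℕ) (hn : 1 ≤ n) (p : ℝ) (hp : 0 < p) (hpn : p < n)
    (N : ℕ) (α : ℝ) (hα : α ∈ Set.Ioo (-1 : ℝ) 1) (hα0 : α ≠ 0) :
    L3 n p α N * Mfull n p α N = Mfull n p α N * L3 n p α N := by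

  ext r s
  have hL : ∀ i j, L3 n p α N i j = Lnat n p α N i.val j.val := fun i j => rfl
  simp only [Matrix.mul_apply, Mfull_eq n p α N hp hpn, hL]
  rw [Fin.sum_univ_eq_sum_range
      (fun t => Lnat n p α N r.val t * ∫ x in (-1 : ℝ)..α, Mg n p t s.val x) (2 * (N + 1)),
    Fin.sum_univ_eq_sum_range
      (fun t => (∫ x in (-1 : ℝ)..α, Mg n p r.val t x) * Lnat n p α N t s.val) (2 * (N + 1)),
    main_sum n hn p hp hpn N α hα hα0 r.val s.val r.isLt s.isLt]
  exact Finset.sum_congr rfl fun t _ => by rw [Lnat_symm n p α N t s.val, mul_comm]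
end

section
/- Let L be any real symmetric matrix of the structural form described in the context (size 2(N+1)). Then det(L) = (-1)^{N+1} · ∏_{j=1}^{N+1} (L_{2j-1,2j})². -/
open Matrix

/-- A real symmetric `2(N+1) × 2(N+1)` matrix `L` has the *structural form* if its only
possibly nonzero entries (in 1-based indexing, together with the symmetrically placed
entries) are: the even diagonal entries `L_{2j,2j}` for `j = 1, …, N+1`; the entries
`L_{2j-1,2j}` for `j = 1, …, N+1`; and the entries `L_{2j,2j+2}` for `j = 1, …, N`.
(Here indices are 0-based, so `L_{2j,2j}` is `L i i` with `i` odd, `L_{2j-1,2j}` is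
`L i (i+1)` with `i` even, and `L_{2j,2j+2}` is `L i (i+2)` with `i` odd.) -/
def StructForm (N : ℕ) (L : Matrix (Fin (2 * (N + 1))) (Fin (2 * (N + 1))) ℝ) : Prop :=
  Lᵀ = L ∧
    ∀ i j : Fin (2 * (N + 1)), i.val ≤ j.val → L i j ≠ 0 →
      (j.val = i.val ∧ i.val % 2 = 1) ∨
      (j.val = i.val + 1 ∧ i.val % 2 = 0) ∨
      (j.val = i.val + 2 ∧ i.val % 2 = 1)

def eoFun (n : ℕ) : Fin n ⊕ Fin n → Fin (2 * n)
  | Sum.inl j => ⟨2 * j.val, by have := j.isLt; omega⟩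
  | Sum.inr j => ⟨2 * j.val + 1, by have := j.isLt; omega⟩

theorem eoFun_bij (n : ℕ) : Function.Bijective (eoFun n) := by
  rw [Fintype.bijective_iff_injective_and_card]
  constructor
  · rintro (a | a) (b | b) h <;> simp only [eoFun, Fin.mk.injEq] at h
    · congr 1; ext; omega
    · omega
    · omega
    · congr 1; ext; omega
  · simp; omega

theorem det_zero_block {n : ℕ} (D B : Matrix (Fin n) (Fin n) ℝ) :
    (fromBlocks 0 D D B).det = D.det * (-D).det := by
  have h : fromBlocks 0 D D B * fromBlocks 1 0 1 1 * fromBlocks 1 (-1) 0 1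
      = fromBlocks D 0 (D + B) (-D) := by
    simp [fromBlocks_multiply]
  have h2 := congrArg Matrix.det h
  simpa [det_mul] using h2

/-- For a matrix `L` of the structural form,
`det L = (-1)^{N+1} ∏_{j=1}^{N+1} (L_{2j-1,2j})²`. -/
theorem stmt_12 (N : ℕ) (L : Matrix (Fin (2 * (N + 1))) (Fin (2 * (N + 1))) ℝ)
    (hL : StructForm N L) :
    L.det = (-1 : ℝ) ^ (N + 1) *
      ∏ j : Fin (N + 1),
        (L ⟨2 * j.val, by have := j.isLt; omega⟩ ⟨2 * j.val + 1, by have := j.isLt; omega⟩) ^ 2 := by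
  obtain ⟨hs, hz⟩ := hL
  have hrow : ∀ i j : Fin (2 * (N + 1)), i.val % 2 = 0 → j.val ≠ i.val + 1 → L i j = 0 := by
    intro i j hi hj
    by_contra hne
    rcases le_total i.val j.val with h | h
    · have := hz i j h hne
      omega
    · have hsym : L j i = L i j := congrFun (congrFun hs i) j
      have := hz j i h (by rw [hsym]; exact hne)
      omega
  have hsy : ∀ i j, L i j = L j i := fun i j => congrFun (congrFun hs j) i
  let e : Fin (N + 1) ⊕ Fin (N + 1) ≃ Fin (2 * (N + 1)) := Equiv.ofBijective _ (eoFun_bij (N + 1))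
  let d : Fin (N + 1) → ℝ := fun j =>
    L ⟨2 * j.val, by have := j.isLt; omega⟩ ⟨2 * j.val + 1, by have := j.isLt; omega⟩
  have hb : L.submatrix e e = fromBlocks 0 (diagonal d) (diagonal d)
      (Matrix.of fun a b => L (e (Sum.inr a)) (e (Sum.inr b))) := by
    ext (a | a) (b | b)
    · exact hrow _ _ (by simp [e, eoFun]) (by simp [e, eoFun]; omega)
    · by_cases hab : a = b
      · subst hab
        simp [e, eoFun, d]
      · simp only [fromBlocks_apply₁₂, diagonal_apply_ne _ hab]
        exact hrow _ _ (by simp [e, eoFun]) (by simp [e, eoFun]; omega)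
    · by_cases hab : a = b
      · subst hab
        simp only [fromBlocks_apply₂₁, diagonal_apply_eq, submatrix_apply]
        exact hsy _ _
      · simp only [fromBlocks_apply₂₁, diagonal_apply_ne _ hab, submatrix_apply]
        rw [hsy]
        exact hrow _ _ (by simp [e, eoFun]) (by simp [e, eoFun]; omega)
    · rfl
  rw [← det_submatrix_equiv_self e L, hb, det_zero_block, det_neg, det_diagonal, Finset.prod_pow]
  simp only [Fintype.card_fin, d]
  ring
end

section
/- Let L be a real symmetric matrix of the structural form described in the context (size 2(N+1)), and suppose L_{2j-1,2j} ≠ 0 for all j = 1, …, N+1. Then L is invertible; in particular 0 is not an eigenvalue of L. -/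
open Matrix

/-- If `L` has the structural form and all entries `L_{2j-1,2j}` are nonzero, then `L`
is invertible; in particular `0` is not an eigenvalue of `L`. -/
theorem stmt_13 (N : ℕ) (L : Matrix (Fin (2 * (N + 1))) (Fin (2 * (N + 1))) ℝ)
    (hL : StructForm N L)
    (hb : ∀ j : Fin (N + 1),
      L ⟨2 * j.val, by have := j.isLt; omega⟩ ⟨2 * j.val + 1, by have := j.isLt; omega⟩ ≠ 0) :
    IsUnit L ∧ ∀ X : Fin (2 * (N + 1)) → ℝ, X ≠ 0 → L.mulVec X ≠ 0 := by
  have key : ∀ X : Fin (2 * (N + 1)) → ℝ, L.mulVec X = 0 → X = 0 := by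
    intro X hX
    obtain ⟨hs, hf⟩ := hL
    have hsym : ∀ i j, L i j = L j i := fun i j => by
      have := congrFun (congrFun hs j) i
      simpa [Matrix.transpose_apply] using this
    have hrow : ∀ i, ∑ k, L i k * X k = 0 := fun i => by
      have := congrFun hX i
      simpa [Matrix.mulVec, dotProduct] using this
    have hodd : ∀ i : Fin (2 * (N + 1)), i.val % 2 = 1 → X i = 0 := by
      intro i hi
      have hlt := i.isLt
      have hbj := hb ⟨i.val / 2, by omega⟩
      have e2 : (⟨2 * (i.val / 2) + 1, by omega⟩ : Fin (2 * (N + 1))) = i := by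
        ext; simp only; omega
      simp only [e2] at hbj
      have h := hrow ⟨2 * (i.val / 2), by omega⟩
      rw [Finset.sum_eq_single i] at h
      · exact (mul_eq_zero.mp h).resolve_left hbj
      · intro k _ hk
        have hk' : k.val ≠ i.val := fun h => hk (Fin.ext h)
        by_cases h0 : L ⟨2 * (i.val / 2), by omega⟩ k = 0
        · rw [h0, zero_mul]
        · exfalso
          rcases le_total (2 * (i.val / 2)) k.val with hle | hle
          · have := hf _ k hle h0
            simp only at this
            omega
          · rw [hsym] at h0
            have := hf k _ hle h0
            simp only at this
            omega
      · simp
    funext i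
    by_cases hi : i.val % 2 = 1
    · exact hodd i hi
    have hlt := i.isLt
    have hbj := hb ⟨i.val / 2, by omega⟩
    have e2 : (⟨2 * (i.val / 2), by omega⟩ : Fin (2 * (N + 1))) = i := by
      ext; simp only; omega
    simp only [e2] at hbj
    rw [hsym] at hbj
    have h := hrow ⟨2 * (i.val / 2) + 1, by omega⟩
    rw [Finset.sum_eq_single i] at h
    · exact (mul_eq_zero.mp h).resolve_left hbj
    · intro k _ hk
      have hk' : k.val ≠ i.val := fun h => hk (Fin.ext h)
      by_cases hk2 : k.val % 2 = 1
      · rw [hodd k hk2, mul_zero]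
      by_cases h0 : L ⟨2 * (i.val / 2) + 1, by omega⟩ k = 0
      · rw [h0, zero_mul]
      · exfalso
        rcases le_total (2 * (i.val / 2) + 1) k.val with hle | hle
        · have := hf _ k hle h0
          simp only at this
          omega
        · rw [hsym] at h0
          have := hf k _ hle h0
          simp only at this
          omega
    · simp
  refine ⟨?_, fun X hX h => hX (key X h)⟩
  rw [← Matrix.mulVec_injective_iff_isUnit]
  intro a b hab
  have := key (a - b) (by rw [Matrix.mulVec_sub]; exact sub_eq_zero.mpr hab)
  exact sub_eq_zero.mp this
end

section
/- Let L be a real symmetric matrix of the structural form described in the context (size 2(N+1)), and suppose L_{2j-1,2j} ≠ 0 for all j = 1, …, N+1 and L_{2j,2j+2} ≠ 0 for all j = 1, …, N. Then every eigenvalue of L has geometric multiplicity one, i.e., for every real λ the eigenspace {X ∈ ℝ^{2(N+1)} : LX = λX} has dimension at most 1. -/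
open Matrix

/-- If `L` has the structural form, all entries `L_{2j-1,2j}` (for `j = 1, …, N+1`) are
nonzero and all entries `L_{2j,2j+2}` (for `j = 1, …, N`) are nonzero, then every
eigenvalue of `L` has geometric multiplicity one: each eigenspace has dimension at
most `1`. -/
theorem stmt_14 (N : ℕ) (L : Matrix (Fin (2 * (N + 1))) (Fin (2 * (N + 1))) ℝ)
    (hL : StructForm N L)
    (hb : ∀ j : Fin (N + 1),
      L ⟨2 * j.val, by have := j.isLt; omega⟩ ⟨2 * j.val + 1, by have := j.isLt; omega⟩ ≠ 0)
    (hc : ∀ j : Fin N,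
      L ⟨2 * j.val + 1, by have := j.isLt; omega⟩ ⟨2 * j.val + 3, by have := j.isLt; omega⟩ ≠ 0) :
    ∀ lam : ℝ,
      Module.finrank ℝ (Module.End.eigenspace (Matrix.toLin' L) lam) ≤ 1 := by
  intro lam
  obtain ⟨hT, hS⟩ := hL
  have hsym : ∀ i j, L i j = L j i := fun i j => by
    conv_lhs => rw [← hT]
    rfl
  have hS2 : ∀ i k : Fin (2 * (N + 1)), L i k ≠ 0 →
      (k.val = i.val ∧ i.val % 2 = 1) ∨ (k.val = i.val + 1 ∧ i.val % 2 = 0) ∨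
      (k.val = i.val + 2 ∧ i.val % 2 = 1) ∨ (i.val = k.val + 1 ∧ k.val % 2 = 0) ∨
      (i.val = k.val + 2 ∧ k.val % 2 = 1) := by
    intro i k h
    rcases le_total i.val k.val with hle | hle
    · have := hS i k hle h
      omega
    · have := hS k i hle (by rwa [hsym k i])
      omega
  have key : ∀ x : Fin (2 * (N + 1)) → ℝ, Matrix.toLin' L x = lam • x →
      x ⟨0, by omega⟩ = 0 → x = 0 := by
    intro x hx h0
    have row : ∀ i m : Fin (2 * (N + 1)), (∀ k, k ≠ m → L i k ≠ 0 → x k = 0) →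
        L i m * x m = lam * x i := by
      intro i m h
      have h1 := congrFun hx i
      rw [Matrix.toLin'_apply, Matrix.mulVec, dotProduct,
        Finset.sum_eq_single m] at h1
      · simpa using h1
      · intro k _ hk
        by_cases hz : L i k = 0
        · simp [hz]
        · simp [h k hk hz]
      · simp
    have even : ∀ (j : ℕ) (hj : j < N + 1),
        L ⟨2 * j, by omega⟩ ⟨2 * j + 1, by omega⟩ * x ⟨2 * j + 1, by omega⟩ =
          lam * x ⟨2 * j, by omega⟩ := by
      intro j hj
      apply row
      intro k hk hne
      exfalso
      have := hS2 _ _ hne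
      apply hk
      ext
      simp only at this ⊢
      omega
    by_cases hl : lam = 0
    · have odd : ∀ (j : ℕ) (hj : j < N + 1), x ⟨2 * j + 1, by omega⟩ = 0 := by
        intro j hj
        have h := even j hj
        rw [hl, zero_mul] at h
        exact (mul_eq_zero.mp h).resolve_left (hb ⟨j, hj⟩)
      have ev : ∀ (j : ℕ) (hj : j < N + 1), x ⟨2 * j, by omega⟩ = 0 := by
        intro j hj
        have h := row ⟨2 * j + 1, by omega⟩ ⟨2 * j, by omega⟩ (by
          intro k hk hne
          have := hS2 _ _ hne
          have hk' : k.val ≠ 2 * j := fun h => hk (Fin.ext h)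
          simp only at this
          have h2 := odd (k.val / 2) (by omega)
          convert h2 using 2
          ext
          simp only
          omega)
        rw [hl, zero_mul, hsym] at h
        exact (mul_eq_zero.mp h).resolve_left (hb ⟨j, hj⟩)
      funext k
      change x k = 0
      rcases Nat.mod_two_eq_zero_or_one k.val with hk | hk
      · have h2 := ev (k.val / 2) (by omega)
        convert h2 using 2
        ext
        simp only
        omega
      · have h2 := odd (k.val / 2) (by omega)
        convert h2 using 2
        ext
        simp only
        omega
    · have ind : ∀ n : ℕ, n < N + 1 → ∀ k : Fin (2 * (N + 1)), k.val ≤ 2 * n + 1 → x k = 0 := by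
        intro n
        induction n with
        | zero =>
          intro hn k hk
          have h := even 0 hn
          have h0' : x ⟨2 * 0, by omega⟩ = 0 := h0
          rw [h0', mul_zero lam] at h
          have h1 := (mul_eq_zero.mp h).resolve_left (hb ⟨0, hn⟩)
          have : k.val = 0 ∨ k.val = 1 := by omega
          rcases this with hk | hk
          · rw [← h0]
            congr 1
            ext
            exact hk
          · rw [← h1]
            congr 1
            ext
            exact hk
        | succ n ih =>
          intro hn k hk
          have ih := ih (by omega)
          have h := row ⟨2 * n + 1, by omega⟩ ⟨2 * n + 3, by omega⟩ (by
            intro k hk hne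
            have := hS2 _ _ hne
            have hk' : k.val ≠ 2 * n + 3 := fun h => hk (Fin.ext h)
            simp only at this
            exact ih k (by omega))
          rw [ih ⟨2 * n + 1, by omega⟩ le_rfl, mul_zero] at h
          have h3 := (mul_eq_zero.mp h).resolve_left (hc ⟨n, by omega⟩)
          have h4 := even (n + 1) hn
          have h3' : x ⟨2 * (n + 1) + 1, by omega⟩ = 0 := h3
          rw [h3', mul_zero] at h4
          have h5 := (mul_eq_zero.mp h4.symm).resolve_left hl
          have : k.val ≤ 2 * n + 1 ∨ k.val = 2 * (n + 1) ∨ k.val = 2 * (n + 1) + 1 := by omega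
          rcases this with hk | hk | hk
          · exact ih k hk
          · rw [← h5]
            congr 1
            ext
            exact hk
          · rw [← h3']
            congr 1
            ext
            exact hk
      funext k
      exact ind N (by omega) k (by omega)
  let f : Module.End.eigenspace (Matrix.toLin' L) lam →ₗ[ℝ] ℝ :=
    (LinearMap.proj (R := ℝ) (φ := fun _ : Fin (2 * (N + 1)) => ℝ) ⟨0, by omega⟩).comp
      (Submodule.subtype _)
  have hf : Function.Injective f := by
    rw [injective_iff_map_eq_zero]
    intro x hx
    exact Subtype.ext (key x.1 (Module.End.mem_eigenspace_iff.mp x.2) hx)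
  have := LinearMap.finrank_le_finrank_of_injective hf
  simpa using this
end

section
/- For all 0 ≤ i, j ≤ N, the (2,1) entry of the block M̃^{i,j} = ∫_{-1}^{α} P_i(x) W_{p,n}(x) P_j(x)^T dx equals (1-α²)^{n/2} · p(n-p) / ((n+1)²(p+j)(n-p+i)) · C_i^{(n+1)/2}(α) · C_j^{(n+1)/2}(α). -/
open Matrix

lemma poch_succ_r (a : ℝ) (k : ℕ) : poch a (k+1) = poch a k * (a + k) := by
  simp [poch, Finset.prod_range_succ]

lemma poch_succ_l (a : ℝ) (k : ℕ) : poch a (k+1) = a * poch (a+1) k := by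
  unfold poch
  rw [Finset.prod_range_succ', mul_comm]
  congr 1
  · simp
  · refine Finset.prod_congr rfl fun i _ => ?_
    push_cast; ring

lemma poch_zero_r (a : ℝ) : poch a 0 = 1 := by simp [poch]

lemma poch_add_r (a : ℝ) (w k : ℕ) : poch a (w+k) = poch a w * poch (a+w) k := by
  unfold poch
  rw [Finset.prod_range_add]
  congr 1
  refine Finset.prod_congr rfl fun i _ => ?_
  push_cast; ring

/-- signed inverse factorial -/
noncomputable def ef (w k : ℕ) : ℝ := poch (-(w:ℝ)) k / (w.factorial : ℝ)

lemma ef_succ_succ (w k : ℕ) : ef (w+1) (k+1) = - ef w k := by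
  unfold ef
  rw [poch_succ_l, Nat.factorial_succ]
  have h : (-((w+1:ℕ):ℝ) + 1) = -(w:ℝ) := by push_cast; ring
  rw [h]
  have : (w.factorial : ℝ) ≠ 0 := by positivity
  have : ((w:ℝ)+1) ≠ 0 := by positivity
  push_cast
  field_simp

lemma ef_succ_r (w k : ℕ) : ef w (k+1) = ef w k * (k - w) := by
  unfold ef
  rw [poch_succ_r]; ring

lemma ef_zero_of_lt {w k : ℕ} (h : w < k) : ef w k = 0 := by
  unfold ef poch
  rw [Finset.prod_eq_zero (i := w) (by simpa using h) (by simp)]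
  simp

/-- coefficients of the Gegenbauer polynomial -/
noncomputable def cf (l : ℝ) (w k : ℕ) : ℝ :=
  ef w k * poch (2*l) (w+k) / (poch (l+1/2) k * (k.factorial : ℝ))

lemma geg_eq (l : ℝ) (w M : ℕ) (hM : w + 1 ≤ M) (x : ℝ) :
    geg l (w:ℤ) x = ∑ k ∈ Finset.range M, cf l w k * ((1-x)/2)^k := by
  have h1 : geg l (w:ℤ) x = ∑ k ∈ Finset.range (w+1), cf l w k * ((1-x)/2)^k := by
    unfold geg
    rw [if_neg (by omega), Int.toNat_natCast, Finset.mul_sum]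
    refine Finset.sum_congr rfl fun k _ => ?_
    unfold cf ef
    rw [poch_add_r, add_comm (w:ℝ)]
    ring
  rw [h1]
  refine Finset.sum_subset (by intro a; simp; omega) ?_
  intro k _ hk
  rw [cf, ef_zero_of_lt (by simpa using hk)]
  simp

lemma geg_neg (l : ℝ) (w : ℤ) (hw : w < 0) (x : ℝ) : geg l w x = 0 := by
  simp [geg, hw]

lemma cf_deriv {l : ℝ} (hl : 0 < l) (m k : ℕ) :
    -((k:ℝ)+1)/2 * cf l (m+1) (k+1) = 2*l*cf (l+1) m k := by
  unfold cf
  rw [ef_succ_succ, show m+1+(k+1) = (m+k)+1+1 by ring, poch_succ_l (2*l), poch_succ_l (2*l+1),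
    poch_succ_l (l+1/2), Nat.factorial_succ, show 2*l+1+1 = 2*(l+1) by ring,
    show l+1/2+1 = l+1+1/2 by ring]
  have h1 : (k.factorial : ℝ) ≠ 0 := by positivity
  have h2 : poch (l+1+1/2) k ≠ 0 := (poch_pos (by positivity) k).ne'
  have h3 : l + 1/2 ≠ 0 := by positivity
  have h4 : (k:ℝ)+1 ≠ 0 := by positivity
  push_cast
  generalize poch (l+1+1/2) k = A at *
  generalize poch (2*(l+1)) (m+k) = B at *
  have h5 : 2*l+1 = 2*(l+1/2) := by ring
  rw [h5]
  generalize l+1/2 = c at *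
  field_simp

lemma geg_hasDeriv {l : ℝ} (hl : 0 < l) (w : ℕ) (x : ℝ) :
    HasDerivAt (geg l (w:ℤ)) (2*l*geg (l+1) ((w:ℤ)-1) x) x := by
  have hf : geg l (w:ℤ) = fun x => ∑ k ∈ Finset.range (w+1), cf l w k * ((1-x)/2)^k := by
    funext y; exact geg_eq l w _ le_rfl y
  rw [hf]
  have ht : HasDerivAt (fun x : ℝ => (1-x)/2) (-1/2) x := by
    simpa using ((hasDerivAt_id x).const_sub 1).div_const 2
  have hd : HasDerivAt (fun x => ∑ k ∈ Finset.range (w+1), cf l w k * ((1-x)/2)^k)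
      (∑ k ∈ Finset.range (w+1), cf l w k * ((k:ℝ) * ((1-x)/2)^(k-1) * (-1/2))) x := by
    apply HasDerivAt.fun_sum
    intro k _
    exact (ht.fun_pow k).const_mul _
  convert hd using 1
  rw [Finset.sum_range_succ']
  cases w with
  | zero => simp [geg_neg]
  | succ m =>
    rw [show (((m+1:ℕ):ℤ) - 1) = (m:ℤ) by push_cast; ring, geg_eq (l+1) m (m+1) le_rfl,
      Finset.mul_sum]
    simp only [CharP.cast_eq_zero, zero_mul, mul_zero, add_zero]
    refine Finset.sum_congr rfl fun k _ => ?_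
    rw [← mul_assoc, ← cf_deriv hl, Nat.add_sub_cancel]
    push_cast
    ring

lemma cf_rec0 {l : ℝ} (hl : 0 < l) (m : ℕ) :
    cf (l+1) (m+1) 0 - cf (l+1) m 0 = (m+2)/(2*l) * cf l (m+2) 0 := by
  unfold cf ef
  simp only [poch_zero_r, add_zero]
  rw [poch_succ_l (2*l), poch_succ_l (2*l+1), show 2*l+1+1 = 2*(l+1) by ring, poch_succ_r,
    Nat.factorial_succ (m+1), Nat.factorial_succ m]
  have h1 : (m.factorial : ℝ) ≠ 0 := by positivity
  have h4 : (m:ℝ)+1 ≠ 0 := by positivity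
  have h5 : (m:ℝ)+1+1 ≠ 0 := by positivity
  push_cast
  field_simp
  ring

lemma cf_rec {l : ℝ} (hl : 0 < l) (m j : ℕ) :
    cf (l+1) (m+1) (j+1) - 2 * cf (l+1) (m+1) j - cf (l+1) m (j+1)
      = (m+2)/(2*l) * cf l (m+2) (j+1) := by
  unfold cf
  have e0 : ef m j = ef (m+1) j * (m+1-j) := by
    have a := ef_succ_succ m j
    have b := ef_succ_r (m+1) j
    push_cast at b
    linarith
  have e1 : ef (m+1) (j+1) = ef (m+1) j * (j-m-1) := by
    rw [ef_succ_r]; push_cast; ring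
  have e2 : ef (m+2) (j+1) = - ef (m+1) j := ef_succ_succ (m+1) j
  have e3 : ef m (j+1) = ef (m+1) j * (m+1-j) * (j-m) := by
    rw [ef_succ_r, e0]
  rw [e1, e2, e3, show m+2+(j+1) = (m+1+j)+1+1 by ring, show m+1+(j+1) = (m+1+j)+1 by ring,
    show m+(j+1) = m+1+j by ring,
    poch_succ_l (2*l), poch_succ_l (2*l+1), poch_succ_r (2*(l+1)), poch_succ_r (l+1+1/2),
    poch_succ_l (l+1/2), Nat.factorial_succ, show 2*l+1+1 = 2*(l+1) by ring,
    show l+1/2+1 = l+1+1/2 by ring]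
  have h1 : (j.factorial : ℝ) ≠ 0 := by positivity
  have h2 : poch (l+1+1/2) j ≠ 0 := (poch_pos (by positivity) j).ne'
  have h3 : l + 1/2 ≠ 0 := by positivity
  have h3' : 2*l + 1 ≠ 0 := by positivity
  have h6 : l + 1 + 1/2 + (j:ℝ) ≠ 0 := by positivity
  have h6' : 2*l + 3 + 2*(j:ℝ) ≠ 0 := by positivity
  have h4 : (j:ℝ)+1 ≠ 0 := by positivity
  push_cast
  generalize poch (l+1+1/2) j = A at *
  generalize poch (2*(l+1)) (m+1+j) = B at *
  rw [show l+1/2 = (2*l+1)/2 by ring, show l+1+1/2+(j:ℝ) = (2*l+3+2*j)/2 by ring]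
  field_simp
  ring

lemma geg_rec {l : ℝ} (hl : 0 < l) (w : ℕ) (x : ℝ) :
    x * geg (l+1) ((w:ℤ)-1) x - geg (l+1) ((w:ℤ)-2) x = w/(2*l) * geg l (w:ℤ) x := by
  rcases w with _ | _ | m
  · simp [geg_neg]
  · rw [geg_neg (l+1) (((0+1:ℕ):ℤ)-2) (by norm_num)]
    rw [geg_eq l 1 2 (by norm_num), show (((0+1:ℕ):ℤ)-1) = ((0:ℕ):ℤ) by norm_num,
      geg_eq (l+1) 0 1 (by norm_num)]
    have h3 : l + 1/2 ≠ 0 := by positivity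
    simp [Finset.sum_range_succ, cf, ef, poch, Finset.prod_range_succ]
    rw [show l+2⁻¹ = (2*l+1)/2 by ring]
    have h3' : 2*l + 1 ≠ 0 := by positivity
    field_simp
    ring
  · rw [show (((m+1+1:ℕ):ℤ)-1) = ((m+1:ℕ):ℤ) by push_cast; ring,
      show (((m+1+1:ℕ):ℤ)-2) = ((m:ℕ):ℤ) by push_cast; ring]
    have key : ∀ t : ℝ, x = 1 - 2*t →
      ∑ k ∈ Finset.range (m+4), cf (l+1) (m+1) k * t^k
        - 2 * t * ∑ k ∈ Finset.range (m+3), cf (l+1) (m+1) k * t^k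
        - ∑ k ∈ Finset.range (m+4), cf (l+1) m k * t^k
        = (m+2)/(2*l) * ∑ k ∈ Finset.range (m+4), cf l (m+2) k * t^k := by
      intro t _
      rw [Finset.sum_range_succ' _ (m+3), Finset.sum_range_succ' _ (m+3),
        Finset.sum_range_succ' (fun k => cf l (m+2) k * t^k) (m+3)]
      have hs : ∑ k ∈ Finset.range (m+3), cf (l+1) (m+1) (k+1) * t^(k+1)
        - 2 * t * ∑ k ∈ Finset.range (m+3), cf (l+1) (m+1) k * t^k
        - ∑ k ∈ Finset.range (m+3), cf (l+1) m (k+1) * t^(k+1)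
        = (m+2)/(2*l) * ∑ k ∈ Finset.range (m+3), cf l (m+2) (k+1) * t^(k+1) := by
        rw [Finset.mul_sum, Finset.mul_sum, ← Finset.sum_sub_distrib, ← Finset.sum_sub_distrib]
        refine Finset.sum_congr rfl fun k _ => ?_
        have := cf_rec hl m k
        linear_combination t^(k+1) * this
      have h0 := cf_rec0 hl m
      simp only [pow_zero, mul_one]
      rw [mul_add, ← hs, ← h0]
      ring
    have := key ((1-x)/2) (by ring)
    rw [← geg_eq _ _ _ (by omega), ← geg_eq _ _ _ (by omega), ← geg_eq _ _ _ (by omega),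
      ← geg_eq _ _ _ (by omega)] at this
    push_cast at this ⊢
    rw [show (m:ℤ)+1+1 = m+2 by ring, show (m:ℝ)+1+1 = m+2 by ring, ← this]
    ring

lemma geg_continuous {l : ℝ} (hl : 0 < l) (w : ℕ) : Continuous (geg l (w:ℤ)) :=
  continuous_iff_continuousAt.2 fun x => (geg_hasDeriv hl w x).continuousAt

lemma geg_continuous_int {l : ℝ} (hl : 0 < l) (w : ℤ) : Continuous (geg l w) := by
  rcases lt_or_ge w 0 with h | h
  · have : geg l w = fun _ => 0 := by funext x; exact geg_neg l w h x
    rw [this]; exact continuous_const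
  · lift w to ℕ using h
    exact geg_continuous hl w

lemma weight_integrable {s α : ℝ} (hs : -1 < s) (hα : α ∈ Set.Ioo (-1:ℝ) 1) :
    IntervalIntegrable (fun x : ℝ => (1-x^2)^s) MeasureTheory.volume (-1) α := by
  have h1 : IntervalIntegrable (fun x : ℝ => (x+1)^s) MeasureTheory.volume (-1) α := by
    have := (intervalIntegral.intervalIntegrable_rpow' (a := 0) (b := α+1) hs).comp_add_right 1
    simpa using this
  have h2 : ContinuousOn (fun x : ℝ => (1-x)^s) (Set.uIcc (-1) α) := by
    apply ContinuousOn.rpow_const (by fun_prop)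
    intro x hx
    rw [Set.uIcc_of_le hα.1.le] at hx
    left
    have := hx.2; have := hα.2
    linarith
  refine (h1.mul_continuousOn h2).congr ?_
  intro x hx
  rw [Set.uIoc_of_le hα.1.le] at hx
  have := hx.1; have := hx.2; have := hα.2
  show (x+1)^s * (1-x)^s = (1-x^2)^s
  rw [← Real.mul_rpow (by linarith) (by linarith)]
  congr 1; ring

/-- The `(2,1)` entry of `M̃^{i,j} = ∫_{-1}^α P_i W_{p,n} P_j^T dx`. -/
theorem stmt_18 (n : ℕ) (hn : 1 ≤ n) (p : ℝ) (hp : 0 < p) (hpn : p < n)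
    (N : ℕ) (α : ℝ) (hα : α ∈ Set.Ioo (-1 : ℝ) 1) :
    ∀ i j : ℕ, i ≤ N → j ≤ N →
      (∫ x in (-1 : ℝ)..α, (Pmat n p i x * Wmat n p x * (Pmat n p j x)ᵀ) 1 0) =
        (1 - α ^ 2) ^ ((n : ℝ) / 2) * p * ((n : ℝ) - p) /
            (((n : ℝ) + 1) ^ 2 * (p + j) * ((n : ℝ) - p + i)) *
          geg (((n : ℝ) + 1) / 2) (i : ℤ) α * geg (((n : ℝ) + 1) / 2) (j : ℤ) α := by
  intro i j _ _
  have hn' : (1:ℝ) ≤ n := by exact_mod_cast hn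
  have hq : 0 < (n:ℝ) - p := by linarith
  have hl : 0 < ((n:ℝ)+1)/2 := by positivity
  have hl3 : ((n:ℝ)+3)/2 = ((n:ℝ)+1)/2 + 1 := by ring
  have hdi : ∀ (w : ℕ) (x : ℝ), HasDerivAt (geg (((n:ℝ)+1)/2) (w:ℤ))
      (((n:ℝ)+1) * geg (((n:ℝ)+3)/2) ((w:ℤ)-1) x) x := by
    intro w x
    have := geg_hasDeriv hl w x
    rw [hl3]
    convert this using 1
    ring
  have hrec : ∀ (w : ℕ) (x : ℝ), geg (((n:ℝ)+3)/2) ((w:ℤ)-2) x =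
      x * geg (((n:ℝ)+3)/2) ((w:ℤ)-1) x - w/((n:ℝ)+1) * geg (((n:ℝ)+1)/2) (w:ℤ) x := by
    intro w x
    have := geg_rec hl w x
    rw [show 2*(((n:ℝ)+1)/2) = n+1 by ring] at this
    rw [hl3]
    linarith
  set K : ℝ := p * ((n:ℝ)-p) / (((n : ℝ) + 1) ^ 2 * (p + j) * ((n : ℝ) - p + i)) with hK
  have hpj : p + j ≠ 0 := by positivity
  have hqi : (n:ℝ) - p + i ≠ 0 := by positivity
  have hn1 : (n:ℝ)+1 ≠ 0 := by positivity
  have hint : ∀ x, (Pmat n p i x * Wmat n p x * (Pmat n p j x)ᵀ) 1 0 =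
      (1-x^2)^((n:ℝ)/2-1) * (K * ((1-x^2) * ((((n:ℝ)+1) * geg (((n:ℝ)+3)/2) ((i:ℤ)-1) x)
          * geg (((n:ℝ)+1)/2) (j:ℤ) x
        + geg (((n:ℝ)+1)/2) (i:ℤ) x * (((n:ℝ)+1) * geg (((n:ℝ)+3)/2) ((j:ℤ)-1) x))
        - n * x * (geg (((n:ℝ)+1)/2) (i:ℤ) x * geg (((n:ℝ)+1)/2) (j:ℤ) x))) := by
    intro x
    simp only [Pmat, Wmat, Matrix.mul_apply, Fin.sum_univ_two, Matrix.transpose_apply,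
      Matrix.smul_apply, smul_eq_mul, Matrix.of_apply, Matrix.cons_val_zero, Matrix.cons_val_one,
      Matrix.cons_val', Matrix.cons_val_fin_one]
    rw [hrec i, hrec j, hK]
    generalize geg (((n:ℝ)+3)/2) ((i:ℤ)-1) x = a
    generalize geg (((n:ℝ)+3)/2) ((j:ℤ)-1) x = b
    generalize geg (((n:ℝ)+1)/2) (i:ℤ) x = c
    generalize geg (((n:ℝ)+1)/2) (j:ℤ) x = d
    generalize (1-x^2)^((n:ℝ)/2-1) = W
    field_simp
    ring
  have hFTC := intervalIntegral.integral_eq_sub_of_hasDerivAt_of_le (a := -1) (b := α) hα.1.le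
    (f := fun x => K * ((1-x^2)^((n:ℝ)/2) *
      (geg (((n:ℝ)+1)/2) (i:ℤ) x * geg (((n:ℝ)+1)/2) (j:ℤ) x)))
    (f' := fun x => (Pmat n p i x * Wmat n p x * (Pmat n p j x)ᵀ) 1 0) ?_ ?_ ?_
  · rw [hFTC, hK]
    have h0 : (1 - (-1:ℝ)^2)^((n:ℝ)/2) = 0 := by
      norm_num
      rw [Real.zero_rpow (by positivity)]
    simp only [h0]
    ring
  · have h1 := geg_continuous hl i
    have h2 := geg_continuous hl j
    have h3 : Continuous fun x : ℝ => (1-x^2)^((n:ℝ)/2) :=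
      Continuous.rpow_const (by fun_prop) fun x => Or.inr (by positivity)
    exact (continuous_const.mul (h3.mul (h1.mul h2))).continuousOn
  · intro x hx
    have hx2 : 0 < 1 - x^2 := by
      have := hx.1; have := hx.2; have := hα.2
      nlinarith
    have hw : HasDerivAt (fun x : ℝ => (1-x^2)^((n:ℝ)/2))
        (-(2*x) * ((n:ℝ)/2) * (1-x^2)^((n:ℝ)/2-1)) x := by
      have hb : HasDerivAt (fun x : ℝ => 1-x^2) (-(2*x)) x := by
        simpa using (hasDerivAt_pow 2 x).const_sub 1
      exact hb.rpow_const (Or.inl hx2.ne')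
    have := (hw.mul ((hdi i x).mul (hdi j x))).const_mul K
    refine this.congr_deriv ?_
    rw [hint x]
    have hs : (1-x^2)^((n:ℝ)/2) = (1-x^2)^((n:ℝ)/2-1) * (1-x^2) := by
      rw [← Real.rpow_add_one hx2.ne']; congr 1; ring
    simp only [Pi.mul_apply]
    rw [hs]
    ring
  · simp only [hint]
    apply (weight_integrable (by linarith) hα).mul_continuousOn
    have h1 := geg_continuous hl i
    have h2 := geg_continuous hl j
    have h3 := geg_continuous_int (l := ((n:ℝ)+3)/2) (by positivity) ((i:ℤ)-1)
    have h4 := geg_continuous_int (l := ((n:ℝ)+3)/2) (by positivity) ((j:ℤ)-1)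
    apply Continuous.continuousOn
    fun_prop
end
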